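/- arXiv:2011.01199 — 6 statements merged into one kernel-verified Lean document; each statement's English description precedes it below -/
import Mathlib

section
/- Suppose α = 3/2 (so that β ∈ [3/4,1)). Then lim_{d→∞} (1/(d ln d)) Σ_{k,l=1}^{⌊dx⌋} δ_{kl}² = 9x/32. -/
open MeasureTheory ProbabilityTheory Filter

noncomputable section

/-- Hypotheses (H.1) and (H.2) on the pair `(φ, ψ)`, together with the
parameter constraints `β ∈ (0,1)`, `λ > 0`, `α ∈ (0, 2β]`, `ν ∈ (1,2]`. -/
def SelfSimilarHyp (β lam α ν : ℝ) (φ ψ : ℝ → ℝ) : Prop :=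
  β ∈ Set.Ioo (0 : ℝ) 1 ∧ 0 < lam ∧ α ∈ Set.Ioc (0 : ℝ) (2 * β) ∧
  ν ∈ Set.Ioc (1 : ℝ) 2 ∧
  -- (H.1): φ(y) = −λ(y−1)^α + ψ(y) on [1,∞)
  (∀ y : ℝ, 1 ≤ y → φ y = -lam * (y - 1) ^ α + ψ y) ∧
  -- ψ is twice differentiable on an open set containing [1,∞)
  (∃ S : Set ℝ, IsOpen S ∧ Set.Ici (1 : ℝ) ⊆ S ∧
    ∀ y ∈ S, DifferentiableAt ℝ ψ y ∧ DifferentiableAt ℝ (deriv ψ) y) ∧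
  -- bounds (a), (b) on ψ', ψ''
  (∃ C₀ : ℝ, 0 ≤ C₀ ∧
    (∀ y : ℝ, 1 < y → |deriv ψ y| ≤ C₀ * y ^ (α - 1)) ∧
    (∀ y : ℝ, 1 < y → |deriv (deriv ψ) y| ≤ C₀ * y⁻¹ * (y - 1) ^ (α - 1))) ∧
  -- (c): ψ'(1) = βψ(1) when α ≥ 1
  (1 ≤ α → deriv ψ 1 = β * ψ 1) ∧
  -- (H.2): bounds (d), (e) on φ', φ'' for y ≥ 2
  (∃ C₁ : ℝ, 0 < C₁ ∧ ∀ y : ℝ, 2 ≤ y →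
    ((α < 1 → |deriv φ y| ≤ C₁ * (y - 1) ^ (-ν) ∧
        |deriv (deriv φ) y| ≤ C₁ * (y - 1) ^ (-ν - 1)) ∧
     (1 ≤ α → |deriv φ y| ≤ C₁ * (y - 1) ^ (α - 2) ∧
        |deriv (deriv φ) y| ≤ C₁ * (y - 1) ^ (α - 3))))

/-- The covariance function `R(s,t) = (s∧t)^{2β} φ((s∨t)/(s∧t))` for `s,t > 0`,
and `R(s,t) = 0` if `s = 0` or `t = 0`. -/
def covR (β : ℝ) (φ : ℝ → ℝ) (s t : ℝ) : ℝ :=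
  if s = 0 ∨ t = 0 then 0 else (min s t) ^ (2 * β) * φ (max s t / min s t)

/-- `Δ(k,l) = R(k+1,l+1) − R(k,l+1) − R(k+1,l) + R(k,l)`. -/
def covΔ (β : ℝ) (φ : ℝ → ℝ) (k l : ℕ) : ℝ :=
  covR β φ (k + 1) (l + 1) - covR β φ k (l + 1) - covR β φ (k + 1) l + covR β φ k l

/-- `δ_{kl} = Δ(k,l)/√(Δ(k,k)Δ(l,l))`. -/
def covδ (β : ℝ) (φ : ℝ → ℝ) (k l : ℕ) : ℝ :=
  covΔ β φ k l / Real.sqrt (covΔ β φ k k * covΔ β φ l l)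

/-- For `m ∈ ℤ`, `a_α(m) = (1/2)(|m+1|^α + |m−1|^α − 2|m|^α)`. -/
def aFun (α : ℝ) (m : ℤ) : ℝ :=
  (|(m : ℝ) + 1| ^ α + |(m : ℝ) - 1| ^ α - 2 * |(m : ℝ)| ^ α) / 2

lemma taylor_aux (f f' f'' : ℝ → ℝ) (C : ℝ) (hf : ∀ y, 1 ≤ y → HasDerivAt f (f' y) y)
    (hf' : ∀ y, 1 ≤ y → HasDerivAt f' (f'' y) y) (hC : ∀ y, 1 < y → y < 2 → |f'' y| ≤ C)
    (h : ℝ) (h0 : 0 < h) (h1 : h ≤ 1) : |f (1 + h) - f 1 - f' 1 * h| ≤ C * h ^ 2 := by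
  have hC0 : 0 ≤ C := (abs_nonneg _).trans (hC (3/2) (by norm_num) (by norm_num))
  obtain ⟨ξ, ⟨hξ1, hξ2⟩, hξ⟩ := exists_hasDerivAt_eq_slope f f' (show (1:ℝ) < 1 + h by linarith)
    (fun y hy => (hf y hy.1).continuousAt.continuousWithinAt) (fun y hy => hf y hy.1.le)
  obtain ⟨ζ, ⟨hζ1, hζ2⟩, hζ⟩ := exists_hasDerivAt_eq_slope f' f'' hξ1
    (fun y hy => (hf' y hy.1).continuousAt.continuousWithinAt) (fun y hy => hf' y hy.1.le)
  have e1 : f (1 + h) - f 1 = f' ξ * h := by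
    rw [hξ, add_sub_cancel_left]; field_simp
  have e2 : f' ξ - f' 1 = f'' ζ * (ξ - 1) := by
    rw [hζ]; field_simp [show ξ - 1 ≠ 0 by linarith]
  have e3 : f (1 + h) - f 1 - f' 1 * h = f'' ζ * (ξ - 1) * h := by
    rw [e1, ← e2]; ring
  rw [e3, abs_mul, abs_mul, abs_of_pos h0, abs_of_pos (show 0 < ξ - 1 by linarith)]
  have := hC ζ hζ1 (by linarith)
  have h3 : |f'' ζ| * (ξ - 1) ≤ C * h := mul_le_mul this (by linarith) (by linarith) hC0
  nlinarith

lemma calc_facts (β lam ν : ℝ) (φ ψ : ℝ → ℝ)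
    (hyp : SelfSimilarHyp β lam (3/2) ν φ ψ) :
    ∃ (p q : ℝ → ℝ) (C : ℝ), 0 < C ∧ (∀ y, 1 < y → HasDerivAt φ (p y) y) ∧
      (∀ y, 1 < y → HasDerivAt p (q y) y) ∧ ContinuousOn φ (Set.Ici 1) ∧
      (∀ y, 1 < y → |(2 * β - 1) * p y - y * q y - 3/4 * lam / √(y - 1)| ≤ C) ∧
      (∀ y, 1 < y → |(2 * β - 1) * p y - y * q y| ≤ C / √(y - 1)) ∧
      (∀ h, 0 < h → h ≤ 1 → |φ (1 + h) - φ 1 - β * φ 1 * h + lam * h ^ (3/2 : ℝ)| ≤ C * h ^ 2) := by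
  obtain ⟨hβ, hlam, hα, hν, hφ, ⟨S, hSo, hS, hd⟩, ⟨C₀, hC₀, hb1, hb2⟩, hc, ⟨C₁, hC₁, hH2⟩⟩ := hyp
  have hd1 : ∀ y, 1 ≤ y → HasDerivAt ψ (deriv ψ y) y := fun y hy => (hd y (hS hy)).1.hasDerivAt
  have hd2 : ∀ y, 1 ≤ y → HasDerivAt (deriv ψ) (deriv (deriv ψ) y) y :=
    fun y hy => (hd y (hS hy)).2.hasDerivAt
  have hβ1 : 3/4 ≤ β := by have := hα.2; linarith
  have hβ2 : β < 1 := hβ.2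
  have hp : ∀ y, 1 < y → HasDerivAt φ (-lam * (3/2) * √(y - 1) + deriv ψ y) y := by
    intro y hy
    have h1 : HasDerivAt (fun y : ℝ => -lam * (y - 1) ^ (3/2 : ℝ) + ψ y)
        (-lam * (3/2) * √(y - 1) + deriv ψ y) y := by
      have h2 := ((hasDerivAt_id y).sub_const 1).rpow_const (p := 3/2) (Or.inr (by norm_num))
      have h3 := (h2.const_mul (-lam)).add (hd1 y hy.le)
      refine h3.congr_deriv ?_
      rw [Real.sqrt_eq_rpow]; norm_num; ring
    refine h1.congr_of_eventuallyEq ?_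
    filter_upwards [Ioi_mem_nhds hy] with z hz
    exact hφ z (le_of_lt hz)
  have hq : ∀ y, 1 < y → HasDerivAt (fun y => -lam * (3/2) * √(y - 1) + deriv ψ y)
      (-lam * (3/4) / √(y - 1) + deriv (deriv ψ) y) y := by
    intro y hy
    have h2 := ((hasDerivAt_id y).sub_const 1).sqrt (by simp; linarith)
    have h3 := (h2.const_mul (-lam * (3/2))).add (hd2 y hy.le)
    refine h3.congr_deriv ?_
    simp; ring
  have hdp : ∀ y, 1 < y → deriv φ y = -lam * (3/2) * √(y - 1) + deriv ψ y := fun y hy => (hp y hy).deriv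
  have hdq : ∀ y, 1 < y → deriv (deriv φ) y = -lam * (3/4) / √(y - 1) + deriv (deriv ψ) y := by
    intro y hy
    refine HasDerivAt.deriv ((hq y hy).congr_of_eventuallyEq ?_)
    filter_upwards [Ioi_mem_nhds hy] with z hz
    exact hdp z hz
  have hφ1 : φ 1 = ψ 1 := by rw [hφ 1 le_rfl]; norm_num
  -- bounds
  have small : ∀ y, 1 < y → y ≤ 2 → |(2 * β - 1) * (-lam * (3/2) * √(y - 1) + deriv ψ y) -
      y * (-lam * (3/4) / √(y - 1) + deriv (deriv ψ) y) - 3/4 * lam / √(y - 1)| ≤ 3 * lam + 3 * C₀ := by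
    intro y hy hy2
    have b1 := hb1 y hy
    have b2 := hb2 y hy
    rw [show (3/2 - 1 : ℝ) = 1/2 by norm_num, ← Real.sqrt_eq_rpow] at b1 b2
    set r := √(y - 1) with hr
    have hr0 : 0 < r := Real.sqrt_pos.2 (by linarith)
    have hr1 : r ≤ 1 := by exact Real.sqrt_le_iff.2 ⟨by norm_num, by linarith⟩
    have hrr : r ^ 2 = y - 1 := Real.sq_sqrt (by linarith)
    have hsy : √y ≤ 2 := by
      rw [Real.sqrt_le_left (by norm_num)]; linarith
    have b1' : |deriv ψ y| ≤ 2 * C₀ := by nlinarith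
    have b2' : |y * deriv (deriv ψ) y| ≤ C₀ := by
      rw [abs_mul, abs_of_pos (by linarith)]
      calc y * |deriv (deriv ψ) y| ≤ y * (C₀ * y⁻¹ * r) := by gcongr
        _ = C₀ * r := by field_simp
        _ ≤ C₀ := by nlinarith
    have e : (2 * β - 1) * (-lam * (3/2) * r + deriv ψ y) -
      y * (-lam * (3/4) / r + deriv (deriv ψ) y) - 3/4 * lam / r =
      (2 * β - 1) * (-lam * (3/2) * r) + (2 * β - 1) * deriv ψ y + 3/4 * lam * r
        - y * deriv (deriv ψ) y := by
      have : y = 1 + r ^ 2 := by linarith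
      have e2 : y * (-lam * (3/4) / r) = -(3/4 * lam / r) - 3/4 * lam * r := by
        rw [this]; field_simp; ring
      rw [mul_add y, e2]; ring
    rw [e]
    have t1 : |(2 * β - 1) * (-lam * (3/2) * r)| ≤ 3/2 * lam := by
      rw [show (2 * β - 1) * (-lam * (3/2) * r) = -((2 * β - 1) * (lam * (3/2) * r)) by ring, abs_neg,
        abs_of_nonneg (by apply mul_nonneg (by linarith); positivity)]
      have : lam * (3/2) * r ≤ lam * (3/2) := by nlinarith
      have h0 : 0 ≤ lam * (3/2) * r := by positivity
      nlinarith
    have t2 : |(2 * β - 1) * deriv ψ y| ≤ 2 * C₀ := by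
      rw [abs_mul, abs_of_nonneg (show 0 ≤ 2 * β - 1 by linarith)]
      have := abs_nonneg (deriv ψ y)
      nlinarith
    have t3 : |3/4 * lam * r| ≤ 3/4 * lam := by
      rw [abs_of_nonneg (by positivity)]; nlinarith
    rw [abs_le] at *
    constructor <;> linarith [t1.1, t1.2, t2.1, t2.2, t3.1, t3.2, b2'.1, b2'.2]
  have large : ∀ y, 2 ≤ y → |(2 * β - 1) * (-lam * (3/2) * √(y - 1) + deriv ψ y) -
      y * (-lam * (3/4) / √(y - 1) + deriv (deriv ψ) y)| ≤ 3 * C₁ / √(y - 1) := by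
    intro y hy
    obtain ⟨b1, b2⟩ := (hH2 y hy).2 (by norm_num)
    rw [← hdp y (by linarith), ← hdq y (by linarith)]
    have hr0 : 0 < √(y - 1) := Real.sqrt_pos.2 (by linarith)
    have hrr : √(y - 1) ^ 2 = y - 1 := Real.sq_sqrt (by linarith)
    have r1 : (y - 1) ^ (3/2 - 2 : ℝ) = 1 / √(y - 1) := by
      rw [show (3/2 - 2 : ℝ) = -(1/2) by norm_num, Real.rpow_neg (by linarith),
        ← Real.sqrt_eq_rpow, one_div]
    have r2 : (y - 1) ^ (3/2 - 3 : ℝ) = 1 / √(y - 1) / (y - 1) := by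
      rw [show (3/2 - 3 : ℝ) = (3/2 - 2) - 1 by norm_num, Real.rpow_sub_one (by linarith), r1]
    rw [r1] at b1
    rw [r2] at b2
    set r := √(y - 1)
    have t1 : |(2 * β - 1) * deriv φ y| ≤ C₁ * (1 / r) := by
      rw [abs_mul, abs_of_nonneg (show 0 ≤ 2 * β - 1 by linarith)]
      have := abs_nonneg (deriv φ y)
      nlinarith
    have t2 : |y * deriv (deriv φ) y| ≤ 2 * C₁ * (1 / r) := by
      rw [abs_mul, abs_of_nonneg (show 0 ≤ y by linarith)]
      have : y ≤ 2 * (y - 1) := by linarith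
      have hy1 : 0 < y - 1 := by linarith
      calc y * |deriv (deriv φ) y| ≤ 2 * (y - 1) * (C₁ * (1 / r / (y - 1))) := by gcongr
        _ = _ := by field_simp
    rw [show 3 * C₁ / r = C₁ * (1 / r) + 2 * C₁ * (1 / r) by ring]
    exact (abs_sub _ _).trans (add_le_add t1 t2)
  have key : ∀ y, 1 < y → ∃ r, r = √(y - 1) ∧ 0 < r ∧ (y ≤ 2 → r ≤ 1) ∧ (2 ≤ y → 1 ≤ r) := by
    intro y hy
    refine ⟨_, rfl, Real.sqrt_pos.2 (by linarith), fun h => ?_, fun h => ?_⟩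
    · exact Real.sqrt_le_iff.2 ⟨by norm_num, by linarith⟩
    · rw [Real.one_le_sqrt]; linarith
  refine ⟨_, _, 4 * lam + 3 * C₀ + 3 * C₁, by positivity, hp, hq, ?_, ?_, ?_, ?_⟩
  · have : ContinuousOn (fun y : ℝ => -lam * (y - 1) ^ (3/2 : ℝ) + ψ y) (Set.Ici 1) := by
      refine ContinuousOn.add (ContinuousOn.mul continuousOn_const ?_)
        (fun y hy => (hd1 y hy).continuousAt.continuousWithinAt)
      exact ContinuousOn.rpow_const (by fun_prop) (fun _ _ => Or.inr (by norm_num))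
    exact this.congr (fun y hy => hφ y hy)
  · intro y hy
    obtain ⟨r, hr, hr0, hr1, hr2⟩ := key y hy
    rcases le_total y 2 with h | h
    · linarith [small y hy h]
    · have := large y h
      rw [← hr] at *
      have hi : 1 / r ≤ 1 := by rw [div_le_one hr0]; exact hr2 h
      have hi0 : 0 < 1 / r := by positivity
      refine (abs_sub _ _).trans ?_
      rw [abs_of_nonneg (show 0 ≤ 3/4 * lam / r by positivity)]
      have e1 : 3 * C₁ / r ≤ 3 * C₁ := by apply div_le_self (by positivity) (hr2 h)
      have e2 : 3 / 4 * lam / r ≤ 3 / 4 * lam := by apply div_le_self (by positivity) (hr2 h)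
      linarith
  · intro y hy
    obtain ⟨r, hr, hr0, hr1, hr2⟩ := key y hy
    rcases le_total y 2 with h | h
    · have h3 := small y hy h
      rw [← hr] at *
      have h4 : 3 * lam + 3 * C₀ ≤ (3 * lam + 3 * C₀) / r := by
        apply le_div_self (by positivity) hr0 (hr1 h)
      have e : (4 * lam + 3 * C₀ + 3 * C₁) / r = (3 * lam + 3 * C₀) / r + 3/4 * lam / r +
        (1/4 * lam + 3 * C₁) / r := by ring
      have h5 : 0 ≤ (1/4 * lam + 3 * C₁) / r := by positivity
      have h6 : 0 ≤ 3/4 * lam / r := by positivity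
      rw [abs_le] at *
      constructor <;> linarith [h3.1, h3.2]
    · refine (large y h).trans ?_
      gcongr
      linarith
  · intro h h0 h1
    have := taylor_aux ψ (deriv ψ) (deriv (deriv ψ)) C₀ hd1 hd2 ?_ h h0 h1
    · rw [hφ (1 + h) (by linarith), hφ1, ← hc (by norm_num)]
      rw [show -lam * (1 + h - 1) ^ (3/2 : ℝ) + ψ (1 + h) - ψ 1 - deriv ψ 1 * h + lam * h ^ (3/2 : ℝ) =
        ψ (1 + h) - ψ 1 - deriv ψ 1 * h by rw [add_sub_cancel_left]; ring]
      refine this.trans ?_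
      gcongr
      linarith
    · intro y hy hy2
      refine (hb2 y hy).trans ?_
      rw [show (3/2 - 1 : ℝ) = 1/2 by norm_num, ← Real.sqrt_eq_rpow]
      have h3 : √(y - 1) ≤ 1 := by exact Real.sqrt_le_iff.2 ⟨by norm_num, by linarith⟩
      have h4 : y⁻¹ ≤ 1 := inv_le_one_of_one_le₀ hy.le
      have : y⁻¹ * √(y - 1) ≤ 1 * 1 := mul_le_mul h4 h3 (Real.sqrt_nonneg _) (by norm_num)
      nlinarith

lemma covR_of_le (β : ℝ) (φ : ℝ → ℝ) (s t : ℝ) (hs : 0 < s) (hst : s ≤ t) :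
    covR β φ s t = s ^ (2 * β) * φ (t / s) := by
  unfold covR
  rw [if_neg (by rintro (h | h) <;> linarith), min_eq_left hst, max_eq_right hst]

lemma covR_symm (β : ℝ) (φ : ℝ → ℝ) (s t : ℝ) : covR β φ s t = covR β φ t s := by
  unfold covR
  rw [min_comm, max_comm]
  simp only [or_comm]

lemma covδ_symm (β : ℝ) (φ : ℝ → ℝ) (k l : ℕ) : covδ β φ k l = covδ β φ l k := by
  unfold covδ
  rw [mul_comm (covΔ β φ k k)]
  congr 1
  unfold covΔ
  rw [covR_symm β φ (k + 1) (l + 1), covR_symm β φ k (l + 1), covR_symm β φ (k + 1) l,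
    covR_symm β φ k l]
  ring

lemma diag_bound (β lam C : ℝ) (φ : ℝ → ℝ) (hβ1 : 3/4 ≤ β) (hβ2 : β < 1) (hC : 0 < C)
    (hφ : ∀ h, 0 < h → h ≤ 1 → |φ (1 + h) - φ 1 - β * φ 1 * h + lam * h ^ (3/2 : ℝ)| ≤ C * h ^ 2) :
    ∃ C' : ℝ, 0 < C' ∧ ∀ k : ℕ, 1 ≤ k →
      |covΔ β φ k k / (k : ℝ) ^ (2 * β - 3/2) - 2 * lam| ≤ C' / √k := by
  refine ⟨2 * |φ 1| + 2 * C, by positivity, fun k hk => ?_⟩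
  have hk0 : (0 : ℝ) < k := by exact_mod_cast hk
  have hk1 : (1 : ℝ) ≤ k := by exact_mod_cast hk
  obtain ⟨h, hh⟩ : ∃ h : ℝ, h = 1 / k := ⟨_, rfl⟩
  have h0 : 0 < h := by rw [hh]; positivity
  have h1 : h ≤ 1 := by rw [hh, div_le_one hk0]; exact hk1
  have hkh : (k : ℝ) + 1 = k * (1 + h) := by rw [hh]; field_simp
  have E2 := hφ h h0 h1
  have E1 := taylor_aux (fun y => y ^ (2 * β)) (fun y => (2 * β) * y ^ (2 * β - 1))
    (fun y => (2 * β) * ((2 * β - 1) * y ^ (2 * β - 1 - 1))) 2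
    (fun y hy => Real.hasDerivAt_rpow_const (Or.inl (by linarith)))
    (fun y hy => (Real.hasDerivAt_rpow_const (Or.inl (by linarith))).const_mul _)
    (fun y hy _ => by
      have e1 : y ^ (2 * β - 1 - 1) ≤ 1 := Real.rpow_le_one_of_one_le_of_nonpos hy.le (by linarith)
      have e2 : 0 < y ^ (2 * β - 1 - 1) := Real.rpow_pos_of_pos (by linarith) _
      rw [abs_of_nonneg (by apply mul_nonneg (by linarith); apply mul_nonneg (by linarith) e2.le)]
      have : (2 * β - 1) * y ^ (2 * β - 1 - 1) ≤ 1 * 1 :=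
        mul_le_mul (by linarith) e1 e2.le (by norm_num)
      have h3 : 0 ≤ (2 * β - 1) * y ^ (2 * β - 1 - 1) := mul_nonneg (by linarith) e2.le
      nlinarith) h h0 h1
  simp only [Real.one_rpow, mul_one] at E1
  have eD : covΔ β φ k k = (k : ℝ) ^ (2 * β) * (φ 1 * ((1 + h) ^ (2 * β) - 1 - 2 * β * h)
      - 2 * (φ (1 + h) - φ 1 - β * φ 1 * h + lam * h ^ (3/2 : ℝ)) + 2 * lam * h ^ (3/2 : ℝ)) := by
    unfold covΔ
    rw [covR_symm β φ (k + 1) k, covR_of_le β φ k k hk0 le_rfl, covR_of_le β φ k (k+1) hk0 (by linarith),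
      covR_of_le β φ (k+1) (k+1) (by linarith) le_rfl, div_self hk0.ne', div_self (by linarith), hkh,
      Real.mul_rpow hk0.le (by linarith), mul_div_cancel_left₀ _ hk0.ne']
    ring
  have eK : (k : ℝ) ^ (2 * β) = (k : ℝ) ^ (2 * β - 3/2) * (k * √k) := by
    rw [Real.sqrt_eq_rpow, ← Real.rpow_one_add' hk0.le (by norm_num), ← Real.rpow_add hk0]
    congr 1; ring
  have e32 : h ^ (3/2 : ℝ) = 1 / (k * √k) := by
    rw [hh, Real.div_rpow (by norm_num) hk0.le, Real.one_rpow, Real.sqrt_eq_rpow,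
      ← Real.rpow_one_add' hk0.le (by norm_num)]
    norm_num
  have hs : 0 < √(k : ℝ) := Real.sqrt_pos.2 hk0
  have hss : √(k : ℝ) ^ 2 = k := Real.sq_sqrt hk0.le
  have hg : 0 < (k : ℝ) ^ (2 * β - 3/2) := Real.rpow_pos_of_pos hk0 _
  generalize φ (1 + h) - φ 1 - β * φ 1 * h + lam * h ^ (3/2 : ℝ) = e2 at *
  generalize (1 + h) ^ (2 * β) - 1 - 2 * β * h = e1 at *
  have : covΔ β φ k k / (k : ℝ) ^ (2 * β - 3/2) - 2 * lam = (k * √k) * (φ 1 * e1 - 2 * e2) := by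
    rw [eD, eK, e32]; field_simp; ring
  rw [this, abs_mul, abs_of_pos (show 0 < k * √(k : ℝ) by positivity)]
  have hb : |φ 1 * e1 - 2 * e2| ≤ (2 * |φ 1| + 2 * C) * h ^ 2 := by
    refine (abs_sub _ _).trans ?_
    rw [abs_mul, abs_mul, abs_of_pos (show (0:ℝ) < 2 by norm_num)]
    have := mul_le_mul_of_nonneg_left E1 (abs_nonneg (φ 1))
    linarith
  calc (k * √k) * |φ 1 * e1 - 2 * e2| ≤ (k * √k) * ((2 * |φ 1| + 2 * C) * h ^ 2) := by gcongr
    _ = (2 * |φ 1| + 2 * C) / √k := by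
      rw [hh]; field_simp; exact hss

lemma mvt_Δ (β : ℝ) (φ p q : ℝ → ℝ) (hp : ∀ y, 1 < y → HasDerivAt φ (p y) y)
    (hq : ∀ y, 1 < y → HasDerivAt p (q y) y) (hc : ContinuousOn φ (Set.Ici 1))
    (k l : ℕ) (hk : 1 ≤ k) (hkl : k < l) (g g' : ℝ → ℝ)
    (hg : ContinuousOn g (Set.Icc (l : ℝ) (l + 1)))
    (hg' : ∀ t ∈ Set.Ioo (l : ℝ) (l + 1), HasDerivAt g (g' t) t) :
    ∃ ξ ∈ Set.Ioo (l : ℝ) (l + 1), ∃ η ∈ Set.Ioo (k : ℝ) (k + 1),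
      (g (l + 1) - g l) * (η ^ (2 * β - 2) * ((2 * β - 1) * p (ξ / η) - ξ / η * q (ξ / η))) =
        covΔ β φ k l * g' ξ := by
  have hk0 : (0 : ℝ) < k := by exact_mod_cast hk
  have hl : (k : ℝ) + 1 ≤ l := by exact_mod_cast hkl
  have hR : ∀ s : ℝ, 0 < s → ∀ t, s < t → HasDerivAt (fun t => s ^ (2 * β) * φ (t / s))
      (s ^ (2 * β - 1) * p (t / s)) t := by
    intro s hs t ht
    have h1 := (hp (t / s) (by rwa [one_lt_div hs])).comp t ((hasDerivAt_id t).div_const s)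
    refine (h1.const_mul _).congr_deriv ?_
    rw [Real.rpow_sub_one hs.ne']; field_simp
  have hRc : ∀ s : ℝ, 0 < s → s ≤ l → ContinuousOn (fun t => s ^ (2 * β) * φ (t / s))
      (Set.Icc (l : ℝ) (l + 1)) := by
    intro s hs hsl
    refine continuousOn_const.mul (hc.comp (by fun_prop) ?_)
    intro t ht
    rw [Set.mem_Ici, one_le_div hs]; linarith [ht.1]
  obtain ⟨ξ, hξ, e⟩ := exists_ratio_hasDerivAt_eq_ratio_slope
    (fun t => ((k : ℝ) + 1) ^ (2 * β) * φ (t / (k + 1)) - (k : ℝ) ^ (2 * β) * φ (t / k))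
    (fun t => ((k : ℝ) + 1) ^ (2 * β - 1) * p (t / (k + 1)) - (k : ℝ) ^ (2 * β - 1) * p (t / k))
    (show (l : ℝ) < l + 1 by linarith)
    ((hRc _ (by linarith) hl).sub (hRc _ hk0 (by linarith)))
    (fun t ht => (hR _ (by linarith) t (by linarith [ht.1])).sub (hR _ hk0 t (by linarith [ht.1])))
    g g' hg hg'
  have hS : ∀ s ∈ Set.Icc (k : ℝ) (k + 1), HasDerivAt (fun s => s ^ (2 * β - 1) * p (ξ / s))
      (s ^ (2 * β - 2) * ((2 * β - 1) * p (ξ / s) - ξ / s * q (ξ / s))) s := by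
    intro s hs
    have hs0 : 0 < s := by linarith [hs.1]
    have h1 := (hq (ξ / s) (by rw [one_lt_div hs0]; linarith [hs.2, hξ.1])).comp s
      ((hasDerivAt_const s ξ).div (hasDerivAt_id s) hs0.ne')
    have h2 := (Real.hasDerivAt_rpow_const (p := 2 * β - 1) (Or.inl hs0.ne')).mul h1
    refine h2.congr_deriv ?_
    simp only [Function.comp, id, Pi.div_apply]
    rw [show 2 * β - 1 - 1 = 2 * β - 2 by ring, show s ^ (2 * β - 1) = s ^ (2 * β - 2) * s by
      rw [← Real.rpow_add_one hs0.ne']; congr 1; ring]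
    field_simp
    ring
  obtain ⟨η, hη, e2⟩ := exists_hasDerivAt_eq_slope (fun s => s ^ (2 * β - 1) * p (ξ / s)) _
    (show (k : ℝ) < k + 1 by linarith) (fun s hs => (hS s hs).continuousAt.continuousWithinAt)
    (fun s hs => hS s (Set.Ioo_subset_Icc_self hs))
  refine ⟨ξ, hξ, η, hη, ?_⟩
  rw [e2, add_sub_cancel_left, div_one, e]
  congr 1
  unfold covΔ
  rw [covR_of_le β φ _ _ _ _, covR_of_le β φ _ _ _ _, covR_of_le β φ _ _ _ _, covR_of_le β φ _ _ _ _]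
  · ring
  all_goals linarith

lemma F_bound (β lam C : ℝ) (hC : 0 < C) (hlam : 0 < lam) (hβ1 : 3/4 ≤ β) (hβ2 : β < 1) (H : ℝ → ℝ)
    (h1 : ∀ y, 1 < y → |H y - 3/4 * lam / √(y - 1)| ≤ C)
    (h2 : ∀ y, 1 < y → |H y| ≤ C / √(y - 1)) (k η ξ : ℝ) (hk : 1 ≤ k) (hη : k < η) (hη' : η < k + 1)
    (hξ : η < ξ) : ∃ w, 1 ≤ w ∧ w ≤ 1 + 1 / k ∧
      |η ^ (2 * β - 2) * H (ξ / η)| ≤ C * w / √(ξ - η) * k ^ (2 * β - 3/2) ∧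
      |η ^ (2 * β - 2) * H (ξ / η) - 3/4 * lam * w / √(ξ - η) * k ^ (2 * β - 3/2)| ≤
        C * w / √k * k ^ (2 * β - 3/2) := by
  have hη0 : 0 < η := by linarith
  have hk0 : 0 < k := by linarith
  refine ⟨(η / k) ^ (2 * β - 3/2), Real.one_le_rpow (by rw [one_le_div hk0]; exact hη.le) (by linarith), ?_, ?_⟩
  · calc (η / k) ^ (2 * β - 3/2) ≤ (η / k) ^ (1 : ℝ) :=
          Real.rpow_le_rpow_of_exponent_le (by rw [one_le_div hk0]; exact hη.le) (by linarith)
      _ = η / k := Real.rpow_one _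
      _ ≤ 1 + 1 / k := by rw [div_le_iff₀ hk0]; field_simp; linarith
  have hy : 1 < ξ / η := by rwa [one_lt_div hη0]
  have a1 := h1 _ hy
  have a2 := h2 _ hy
  have e1 : √(ξ / η - 1) = √(ξ - η) / √η := by
    rw [← Real.sqrt_div' _ hη0.le]; congr 1; field_simp
  have e2 : η ^ (2 * β - 2) = (η / k) ^ (2 * β - 3/2) * k ^ (2 * β - 3/2) / √η := by
    rw [← Real.mul_rpow (by positivity) hk0.le, div_mul_cancel₀ _ hk0.ne', Real.sqrt_eq_rpow,
      ← Real.rpow_sub hη0]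
    congr 1; ring
  have hw : 0 < (η / k) ^ (2 * β - 3/2) := Real.rpow_pos_of_pos (by positivity) _
  have hkk : 0 < k ^ (2 * β - 3/2) := Real.rpow_pos_of_pos hk0 _
  rw [e1] at a1 a2
  rw [e2]
  generalize (η / k) ^ (2 * β - 3/2) = w at *
  generalize k ^ (2 * β - 3/2) = kk at *
  generalize H (ξ / η) = Hy at *
  have hs : 0 < √η := Real.sqrt_pos.2 hη0
  have hsk : 0 < √k := Real.sqrt_pos.2 hk0
  have hsh : 0 < √(ξ - η) := Real.sqrt_pos.2 (by linarith)
  have hle : √k ≤ √η := Real.sqrt_le_sqrt hη.le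
  constructor
  · rw [abs_mul, abs_of_pos (by positivity)]
    calc w * kk / √η * |Hy| ≤ w * kk / √η * (C / (√(ξ - η) / √η)) := by gcongr
      _ = _ := by field_simp
  · rw [show w * kk / √η * Hy - 3/4 * lam * w / √(ξ - η) * kk = w * kk / √η * (Hy - 3/4 * lam / (√(ξ - η) / √η)) by
      field_simp]
    rw [abs_mul, abs_of_pos (by positivity)]
    calc w * kk / √η * |Hy - 3/4 * lam / (√(ξ - η) / √η)| ≤ w * kk / √k * C := by gcongr
      _ = _ := by ring

set_option maxHeartbeats 1000000 in
lemma offdiag_bound (β lam ν : ℝ) (φ ψ : ℝ → ℝ)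
    (hyp : SelfSimilarHyp β lam (3/2) ν φ ψ) :
    ∃ C : ℝ, 0 < C ∧ (∀ k m : ℕ, 1 ≤ k → 1 ≤ m →
      |√m * covΔ β φ k (k + m) / (k : ℝ) ^ (2 * β - 3/2)| ≤ C ∧
      |√m * covΔ β φ k (k + m) / (k : ℝ) ^ (2 * β - 3/2) - 3/4 * lam| ≤
        C * (1 / m + √m / √k)) ∧ ∀ k : ℕ, 1 ≤ k →
      |covΔ β φ k k / (k : ℝ) ^ (2 * β - 3/2) - 2 * lam| ≤ C / √k := by
  obtain ⟨p, q, C, hC, hp, hq, hc, h1, h2, h3⟩ := calc_facts β lam ν φ ψ hyp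
  have hlam : 0 < lam := hyp.2.1
  have hβ2 : β < 1 := hyp.1.2
  have hβ1 : 3/4 ≤ β := by have := hyp.2.2.1.2; linarith
  obtain ⟨C', hC', hd⟩ := diag_bound β lam C φ hβ1 hβ2 hC h3
  have hF := F_bound β lam C hC hlam hβ1 hβ2 (fun y => (2 * β - 1) * p y - y * q y) h1 h2
  refine ⟨4 * C + 4 * lam + C', by positivity, fun k m hk hm => ?_, fun k hk => (hd k hk).trans (by gcongr; linarith)⟩
  have hk1 : (1 : ℝ) ≤ k := by exact_mod_cast hk
  have hm1 : (1 : ℝ) ≤ m := by exact_mod_cast hm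
  have hk0 : (0 : ℝ) < k := by linarith
  have hkk : 0 < (k : ℝ) ^ (2 * β - 3/2) := Real.rpow_pos_of_pos hk0 _
  have hsk : 0 < √(k : ℝ) := Real.sqrt_pos.2 hk0
  have hsm : 1 ≤ √(m : ℝ) := Real.one_le_sqrt.2 hm1
  have hsk1 : 1 ≤ √(k : ℝ) := Real.one_le_sqrt.2 hk1
  have hik : 1 / (k : ℝ) ≤ 1 := by rw [div_le_one hk0]; exact hk1
  have hcast : ((k + m : ℕ) : ℝ) = k + m := by push_cast; ring
  rcases Nat.lt_or_ge 1 m with hm2 | hm2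
  · have hm2' : (2 : ℝ) ≤ m := by exact_mod_cast hm2
    obtain ⟨ξ, hξ, η, hη, e⟩ := mvt_Δ β φ p q hp hq hc k (k + m) hk (by omega) id (fun _ => 1)
      continuousOn_id (fun t _ => hasDerivAt_id t)
    rw [hcast] at hξ e
    obtain ⟨w, hw1, hw2, b1, b2⟩ := hF k η ξ hk1 hη.1 hη.2 (by linarith [hη.2, hξ.1])
    simp only [id, add_sub_cancel_left, one_mul, mul_one] at e
    simp only [e] at b1 b2
    have hh1 : (m : ℝ) - 1 < ξ - η := by linarith [hη.2, hξ.1]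
    have hh2 : ξ - η < m + 1 := by linarith [hη.1, hξ.2]
    have hsh : 0 < √(ξ - η) := Real.sqrt_pos.2 (by linarith)
    obtain ⟨z, hz⟩ : ∃ z, z = √m / √(ξ - η) := ⟨_, rfl⟩
    have hz0 : 0 < z := by rw [hz]; positivity
    have hzz : z ^ 2 = m / (ξ - η) := by
      rw [hz, div_pow, Real.sq_sqrt (by linarith), Real.sq_sqrt (by linarith)]
    have hz1 : |z - 1| ≤ 2 / m := by
      have e1 : |z - 1| * (z + 1) = |z ^ 2 - 1| := by
        rw [show z ^ 2 - 1 = (z - 1) * (z + 1) by ring, abs_mul, abs_of_pos (show 0 < z + 1 by linarith)]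
      have e2 : |z ^ 2 - 1| ≤ 2 / (m : ℝ) := by
        rw [hzz, show (m : ℝ) / (ξ - η) - 1 = (m - (ξ - η)) / (ξ - η) by
          have : ξ - η ≠ 0 := by linarith
          field_simp, abs_div, abs_of_pos (show 0 < ξ - η by linarith),
          div_le_div_iff₀ (by linarith) (by linarith)]
        have : |(m : ℝ) - (ξ - η)| ≤ 1 := by rw [abs_le]; constructor <;> linarith
        nlinarith only [this, hh1, hm2']
      have := abs_nonneg (z - 1)
      nlinarith only [this, e1, e2, hz0]
    have hmi : 2 / (m : ℝ) ≤ 1 := by rw [div_le_one (by linarith)]; exact hm2'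
    have hz2 : z ≤ 2 := by have := (abs_le.1 hz1).2; linarith
    set V := √m * covΔ β φ k (k + m) / (k : ℝ) ^ (2 * β - 3/2) with hV
    have c1 : |V| ≤ C * w * z := by
      rw [hV, abs_div, abs_mul, abs_of_pos hkk, abs_of_pos (show 0 < √(m : ℝ) by linarith), div_le_iff₀ hkk]
      calc √m * |covΔ β φ k (k + m)| ≤ √m * (C * w / √(ξ - η) * k ^ (2 * β - 3/2)) := by gcongr
        _ = _ := by rw [hz]; ring
    have c2 : |V - 3/4 * lam * w * z| ≤ C * w * (√m / √k) := by
      rw [show V - 3/4 * lam * w * z = √m * (covΔ β φ k (k + m) - 3/4 * lam * w / √(ξ - η) * k ^ (2 * β - 3/2)) / k ^ (2 * β - 3/2) by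
        rw [hV, hz]; field_simp]
      rw [abs_div, abs_mul, abs_of_pos hkk, abs_of_pos (show 0 < √(m : ℝ) by linarith), div_le_iff₀ hkk]
      calc √m * |_| ≤ √m * (C * w / √k * k ^ (2 * β - 3/2)) := by gcongr
        _ = _ := by ring
    have hw3 : w ≤ 2 := by linarith
    constructor
    · refine c1.trans ?_
      calc C * w * z ≤ C * 2 * 2 := by gcongr
        _ ≤ _ := by linarith
    · obtain ⟨T, hT⟩ : ∃ T, T = √(m : ℝ) / √k := ⟨_, rfl⟩
      have hT0 : 0 < T := by rw [hT]; positivity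
      have hkT : 1 / (k : ℝ) ≤ T := by
        rw [hT, div_le_div_iff₀ hk0 hsk]
        have : √(k : ℝ) ^ 2 = k := Real.sq_sqrt hk0.le
        nlinarith only [this, hsk1, hsm]
      rw [← hT] at c2 ⊢
      have c3 : |w * z - 1| ≤ 2 * T + 2 * (1 / m) := by
        rw [show w * z - 1 = (w - 1) * z + (z - 1) by ring]
        refine (abs_add_le _ _).trans ?_
        rw [abs_mul, abs_of_nonneg (show 0 ≤ w - 1 by linarith), abs_of_pos hz0]
        have : (w - 1) * z ≤ T * 2 := mul_le_mul (by linarith) hz2 hz0.le hT0.le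
        have e5 : 2 / (m : ℝ) = 2 * (1 / m) := by ring
        linarith
      have c4 : |3/4 * lam * (w * z - 1)| ≤ 3/4 * lam * (2 * T + 2 * (1 / m)) := by
        rw [abs_mul, abs_of_pos (show 0 < 3/4 * lam by positivity)]
        gcongr
      have c5 : C * w * T ≤ C * 2 * T := by gcongr
      have hmm : 0 < 1 / (m : ℝ) := by positivity
      rw [show V - 3/4 * lam = (V - 3/4 * lam * w * z) + 3/4 * lam * (w * z - 1) by ring]
      refine (abs_add_le _ _).trans ?_
      have d1 := mul_pos hC hmm
      have d2 := mul_pos hC' hmm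
      have d3 := mul_pos hC' hT0
      have d4 := mul_pos hC hT0
      have d5 := mul_pos hlam hT0
      have d6 := mul_pos hlam hmm
      linarith
  · have hm' : m = 1 := by omega
    subst hm'
    obtain ⟨ξ, hξ, η, hη, e⟩ := mvt_Δ β φ p q hp hq hc k (k + 1) hk (by omega)
      (fun t => √(t - (k + 1 : ℕ))) (fun t => 1 / (2 * √(t - (k + 1 : ℕ))))
      (by fun_prop) (fun t ht => ((hasDerivAt_id t).sub_const _).sqrt (by simp only [id]; linarith [ht.1]))
    obtain ⟨w, hw1, hw2, b1, b2⟩ := hF k η ξ hk1 hη.1 hη.2 (by have := hξ.1; push_cast at this; linarith [hη.2])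
    simp only [add_sub_cancel_left, sub_self, Real.sqrt_zero, Real.sqrt_one, sub_zero, one_mul] at e
    simp only [e] at b1
    have hx0 : 0 < ξ - (k + 1 : ℕ) := by linarith [hξ.1]
    have hs0 : 0 < √(ξ - (k + 1 : ℕ)) := Real.sqrt_pos.2 hx0
    have hle : √(ξ - (k + 1 : ℕ)) ≤ √(ξ - η) := Real.sqrt_le_sqrt (by push_cast; linarith [hη.2])
    have c1 : |√((1:ℕ):ℝ) * covΔ β φ k (k + 1) / (k : ℝ) ^ (2 * β - 3/2)| ≤ 4 * C := by
      rw [Nat.cast_one, Real.sqrt_one, one_mul, abs_div, abs_of_pos hkk, div_le_iff₀ hkk]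
      rw [abs_mul, abs_of_pos (show 0 < 1 / (2 * √(ξ - (k + 1 : ℕ))) by positivity)] at b1
      have : C * w / √(ξ - η) * (k : ℝ) ^ (2 * β - 3/2) ≤ C * 2 / √(ξ - (k + 1 : ℕ)) * (k : ℝ) ^ (2 * β - 3/2) := by
        gcongr
        linarith
      have h5 := b1.trans this
      rw [mul_one_div, div_le_iff₀ (by positivity)] at h5
      refine h5.trans (le_of_eq ?_)
      field_simp
      ring
    refine ⟨by linarith, ?_⟩
    refine (abs_sub _ _).trans ?_
    rw [abs_of_pos (show 0 < 3/4 * lam by positivity)]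
    have : 0 ≤ (4 * C + 4 * lam + C') * (√((1:ℕ):ℝ) / √k) := by positivity
    rw [mul_add]
    simp only [Nat.cast_one, div_one, mul_one] at *
    linarith

lemma exists_lower (u : ℕ → ℝ) (hu : ∀ k, 1 ≤ k → 0 < u k) (L C : ℝ) (hL : 0 < L)
    (h : ∀ k : ℕ, 1 ≤ k → |u k - 2 * L| ≤ C / √k) : ∃ c, 0 < c ∧ ∀ k, 1 ≤ k → c ≤ u k := by
  have fin : ∀ K : ℕ, ∃ c, 0 < c ∧ ∀ k, 1 ≤ k → k ≤ K → c ≤ u k := by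
    intro K
    induction K with
    | zero => exact ⟨1, one_pos, fun k h1 h2 => by omega⟩
    | succ K ih =>
      obtain ⟨c, hc, h⟩ := ih
      refine ⟨min c (u (K + 1)), lt_min hc (hu _ (by omega)), fun k h1 h2 => ?_⟩
      rcases Nat.lt_or_ge K k with h3 | h3
      · obtain rfl : k = K + 1 := by omega
        exact min_le_right _ _
      · exact (min_le_left _ _).trans (h k h1 h3)
  obtain ⟨K, hK⟩ := exists_nat_ge ((C / L) ^ 2)
  obtain ⟨c, hc, hc2⟩ := fin K
  refine ⟨min c L, lt_min hc hL, fun k hk => ?_⟩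
  rcases le_total k K with h3 | h3
  · exact (min_le_left _ _).trans (hc2 k hk h3)
  · refine (min_le_right _ _).trans ?_
    have hk0 : (0 : ℝ) < k := by exact_mod_cast hk
    have : C / L ≤ √k := Real.le_sqrt_of_sq_le (hK.trans (by exact_mod_cast h3))
    have h4 : C / √k ≤ L := by
      rw [div_le_iff₀ (Real.sqrt_pos.2 hk0)]
      rw [div_le_iff₀ hL] at this
      linarith
    have := (abs_le.1 (h k hk)).1
    linarith

lemma alg_bound (v W a b lam C c E : ℝ) (hlam : 0 < lam) (hC : 0 < C) (hc : 0 < c) (hE : 0 ≤ E)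
    (hv : |v| ≤ C) (hv2 : |v - 3/4 * lam| ≤ 2 * C * E) (hW0 : 0 ≤ W) (hW1 : |W - 1| ≤ E)
    (ha : c ≤ a) (hb : c ≤ b) (ha3 : a ≤ 2 * lam + C)
    (ha2 : |a - 2 * lam| ≤ 2 * C * E) (hb2 : |b - 2 * lam| ≤ 2 * C * E) :
    |v ^ 2 * W / (a * b) - 9/64| ≤
      (C ^ 2 + 2 * C * (C + lam) + (2 * lam + C) * (2 * C) + 2 * lam * (2 * C)) / c ^ 2 * E := by
  have ha0 : 0 < a := by linarith
  have hb0 : 0 < b := by linarith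
  have e : v ^ 2 * W / (a * b) - 9/64 = (v ^ 2 * (W - 1) + (v - 3/4 * lam) * (v + 3/4 * lam)
    - 9/64 * (a * (b - 2 * lam) + 2 * lam * (a - 2 * lam))) / (a * b) := by
    field_simp; ring
  have t1 : |v ^ 2 * (W - 1)| ≤ C ^ 2 * E := by
    rw [abs_mul, abs_pow]; gcongr
  have t2 : |(v - 3/4 * lam) * (v + 3/4 * lam)| ≤ 2 * C * E * (C + lam) := by
    rw [abs_mul]
    have : |v + 3/4 * lam| ≤ C + lam := by
      rw [abs_le] at *; constructor <;> linarith [hv.1, hv.2]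
    gcongr
  have t3 : |a * (b - 2 * lam)| ≤ (2 * lam + C) * (2 * C * E) := by
    rw [abs_mul, abs_of_pos ha0]; gcongr
  have t4 : |2 * lam * (a - 2 * lam)| ≤ 2 * lam * (2 * C * E) := by
    rw [abs_mul, abs_of_pos (by positivity : 0 < 2 * lam)]; gcongr
  have t5 : |v ^ 2 * (W - 1) + (v - 3/4 * lam) * (v + 3/4 * lam)
    - 9/64 * (a * (b - 2 * lam) + 2 * lam * (a - 2 * lam))| ≤
     (C ^ 2 + 2 * C * (C + lam) + (2 * lam + C) * (2 * C) + 2 * lam * (2 * C)) * E := by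
    have p3 : 0 ≤ (2 * lam + C) * (2 * C * E) := by positivity
    have p4 : 0 ≤ 2 * lam * (2 * C * E) := by positivity
    rw [abs_le] at *
    constructor <;> nlinarith [t1.1, t1.2, t2.1, t2.2, t3.1, t3.2, t4.1, t4.2]
  rw [e, abs_div, abs_of_pos (mul_pos ha0 hb0)]
  have : c ^ 2 ≤ a * b := by rw [sq]; exact mul_le_mul ha hb hc.le ha0.le
  refine (div_le_div₀ (by positivity) t5 (by positivity) this).trans (le_of_eq ?_)
  ring

lemma le_two_mul_aux (a b : ℝ) (hb : 0 ≤ b) (h : a ^ 2 ≤ 4 * b ^ 2) : a ≤ 2 * b :=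
  (abs_le_of_sq_le_sq' (by linarith [show (2 * b) ^ 2 = 4 * b ^ 2 by ring]) (by linarith)).2

set_option maxHeartbeats 1000000 in
lemma key_bound (β lam ν : ℝ) (φ ψ : ℝ → ℝ) (hyp : SelfSimilarHyp β lam (3/2) ν φ ψ)
    (hΔ : ∀ k : ℕ, 0 < covΔ β φ k k) :
    ∃ C : ℝ, 0 < C ∧ ∀ k m : ℕ, 1 ≤ k → 1 ≤ m →
      |m * covδ β φ k (k + m) ^ 2 - 9/64| ≤ C * (1 / m + √m / √((k + m : ℕ) : ℝ)) := by
  obtain ⟨C, hC, hoff, hdiag⟩ := offdiag_bound β lam ν φ ψ hyp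
  have hlam : 0 < lam := hyp.2.1
  have hβ2 : β < 1 := hyp.1.2
  have hβ1 : 3/4 ≤ β := by have := hyp.2.2.1.2; linarith
  have hpw : ∀ k : ℕ, 1 ≤ k → 0 < (k : ℝ) ^ (2 * β - 3/2) := fun k hk =>
    Real.rpow_pos_of_pos (by exact_mod_cast hk) _
  obtain ⟨c, hc, hlow⟩ := exists_lower (fun k => covΔ β φ k k / (k : ℝ) ^ (2 * β - 3/2))
    (fun k hk => div_pos (hΔ k) (hpw k hk)) lam C hlam hdiag
  obtain ⟨M, hM⟩ : ∃ M, M = (C ^ 2 + 2 * C * (C + lam) + (2 * lam + C) * (2 * C) + 2 * lam * (2 * C)) / c ^ 2 := ⟨_, rfl⟩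
  have hM0 : 0 < M := by rw [hM]; positivity
  refine ⟨M + 2 * (C ^ 2 / c ^ 2 + 9/64), by positivity, fun k m hk hm => ?_⟩
  obtain ⟨hv1, hv2⟩ := hoff k m hk hm
  have ha := hlow k hk
  have hb := hlow (k + m) (by omega)
  have ha2 := hdiag k hk
  have hb2 := hdiag (k + m) (by omega)
  have hk1 : (1 : ℝ) ≤ k := by exact_mod_cast hk
  have hm1 : (1 : ℝ) ≤ m := by exact_mod_cast hm
  have hk0 : (0 : ℝ) < k := by linarith
  have hcast : ((k + m : ℕ) : ℝ) = k + m := by push_cast; ring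
  obtain ⟨W, hW⟩ : ∃ W, W = ((k : ℝ) / (k + m : ℕ)) ^ (2 * β - 3/2) := ⟨_, rfl⟩
  have hl0 : (0 : ℝ) < (k + m : ℕ) := by rw [hcast]; linarith
  have hkl0 : 0 < (k : ℝ) / (k + m : ℕ) := by positivity
  have hkl1 : (k : ℝ) / (k + m : ℕ) ≤ 1 := by rw [div_le_one hl0, hcast]; linarith
  have hW0 : 0 < W := by rw [hW]; exact Real.rpow_pos_of_pos hkl0 _
  have hW1 : W ≤ 1 := by rw [hW]; exact Real.rpow_le_one hkl0.le hkl1 (by linarith)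
  have hW2 : (k : ℝ) / (k + m : ℕ) ≤ W := by
    rw [hW]
    calc (k : ℝ) / (k + m : ℕ) = ((k : ℝ) / (k + m : ℕ)) ^ (1 : ℝ) := (Real.rpow_one _).symm
      _ ≤ _ := Real.rpow_le_rpow_of_exponent_ge hkl0 hkl1 (by linarith)
  have hWe : W = (k : ℝ) ^ (2 * β - 3/2) / ((k + m : ℕ) : ℝ) ^ (2 * β - 3/2) := by
    rw [hW, Real.div_rpow hk0.le hl0.le]
  have hpk := hpw k hk
  have hpl := hpw (k + m) (by omega)
  have hDk := hΔ k
  have hDl := hΔ (k + m)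
  have hsm : √(m : ℝ) ^ 2 = m := Real.sq_sqrt (by linarith)
  have main : m * covδ β φ k (k + m) ^ 2 =
      (√m * covΔ β φ k (k + m) / (k : ℝ) ^ (2 * β - 3/2)) ^ 2 * W /
        (covΔ β φ k k / (k : ℝ) ^ (2 * β - 3/2) *
          (covΔ β φ (k + m) (k + m) / ((k + m : ℕ) : ℝ) ^ (2 * β - 3/2))) := by
    unfold covδ
    rw [div_pow, Real.sq_sqrt (by positivity), hWe, div_pow, mul_pow, hsm]
    field_simp
  rw [main]
  have hsk : 0 < √(k : ℝ) := Real.sqrt_pos.2 hk0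
  have hsk1 : 1 ≤ √(k : ℝ) := Real.one_le_sqrt.2 hk1
  have hsm1 : 1 ≤ √(m : ℝ) := Real.one_le_sqrt.2 hm1
  have hsl : 0 < √((k + m : ℕ) : ℝ) := Real.sqrt_pos.2 hl0
  have hsl2 : √((k + m : ℕ) : ℝ) ^ 2 = k + m := by rw [Real.sq_sqrt hl0.le, hcast]
  have hml : √(m : ℝ) ≤ √((k + m : ℕ) : ℝ) := Real.sqrt_le_sqrt (by rw [hcast]; linarith)
  have hsk2 : √(k : ℝ) ^ 2 = k := Real.sq_sqrt hk0.le
  have hkl : √(k : ℝ) ≤ √((k + m : ℕ) : ℝ) := Real.sqrt_le_sqrt (by rw [hcast]; linarith)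
  obtain ⟨E, hE⟩ : ∃ E, E = 1 / (m : ℝ) + √m / √((k + m : ℕ) : ℝ) := ⟨_, rfl⟩
  have hE0 : 0 < E := by rw [hE]; positivity
  have hE1 : √m / √((k + m : ℕ) : ℝ) ≤ E := by
    rw [hE]; have : 0 < 1 / (m : ℝ) := by positivity
    linarith
  have hE2 : 1 / (m : ℝ) ≤ E := by
    rw [hE]; have : 0 < √m / √((k + m : ℕ) : ℝ) := by positivity
    linarith
  rw [← hE]
  rcases le_total m k with hmk | hmk
  · have hmk' : (m : ℝ) ≤ k := by exact_mod_cast hmk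
    have hl2 : √((k + m : ℕ) : ℝ) ≤ 2 * √k := le_two_mul_aux _ _ hsk.le (by rw [hsl2, hsk2]; linarith)
    have hT : √(m : ℝ) / √k ≤ 2 * (√m / √((k + m : ℕ) : ℝ)) := by
      rw [← mul_div_assoc, div_le_div_iff₀ hsk hsl]
      nlinarith only [hl2, hsm1]
    have hT2 : 1 / √(k : ℝ) ≤ 2 * E := by
      have : 1 / √(k : ℝ) ≤ √(m : ℝ) / √k := by gcongr
      linarith
    have g1 : C / √(k : ℝ) ≤ 2 * C * E := by
      rw [show C / √(k : ℝ) = C * (1 / √k) by ring]; nlinarith only [hT2, hC]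
    have g2 : C / √((k + m : ℕ) : ℝ) ≤ 2 * C * E := by
      refine le_trans ?_ g1
      gcongr
    have g3 : C / √(k : ℝ) ≤ C := div_le_self hC.le hsk1
    have g4 : C * (1 / m + √m / √k) ≤ 2 * C * E := by
      have : 1 / m + √m / √k ≤ 2 * E := by
        rw [hE]
        have : 0 < 1 / (m : ℝ) := by positivity
        linarith
      nlinarith only [this, hC]
    have g5 : |W - 1| ≤ E := by
      rw [abs_sub_comm, abs_of_nonneg (by linarith)]
      have : 1 - (k : ℝ) / (k + m : ℕ) ≤ √m / √((k + m : ℕ) : ℝ) := by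
        have e1 : 1 - (k : ℝ) / (k + m : ℕ) = (√m / √((k + m : ℕ) : ℝ)) ^ 2 := by
          rw [div_pow, hsm, hsl2, hcast]; field_simp; ring
        have e2 : √m / √((k + m : ℕ) : ℝ) ≤ 1 := by rw [div_le_one hsl]; exact hml
        have e3 : 0 ≤ √m / √((k + m : ℕ) : ℝ) := by positivity
        rw [e1]; nlinarith only [e2, e3]
      linarith
    refine (alg_bound _ W _ _ lam C c E hlam hC hc hE0.le hv1 (hv2.trans g4) hW0.le g5 ha hb ?_
      (ha2.trans g1) (hb2.trans g2)).trans ?_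
    · have := (abs_le.1 ha2).2; linarith
    · rw [← hM]
      gcongr
      have : 0 < C ^ 2 / c ^ 2 := by positivity
      linarith
  · have hmk' : (k : ℝ) ≤ m := by exact_mod_cast hmk
    have hh : 1/2 ≤ E := by
      refine le_trans ?_ hE1
      rw [div_le_div_iff₀ (by norm_num) hsl]
      have := le_two_mul_aux (√((k + m : ℕ) : ℝ)) (√m) (by linarith) (by rw [hsl2, hsm]; linarith)
      linarith
    generalize √m * covΔ β φ k (k + m) / (k : ℝ) ^ (2 * β - 3/2) = v at *
    generalize covΔ β φ k k / (k : ℝ) ^ (2 * β - 3/2) = a at *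
    generalize covΔ β φ (k + m) (k + m) / ((k + m : ℕ) : ℝ) ^ (2 * β - 3/2) = b at *
    have ha0 : 0 < a := by linarith
    have hb0 : 0 < b := by linarith
    have hab : c ^ 2 ≤ a * b := by rw [sq]; exact mul_le_mul ha hb hc.le ha0.le
    have hvv : v ^ 2 ≤ C ^ 2 := by rw [← sq_abs v]; gcongr
    have t1 : v ^ 2 * W / (a * b) ≤ C ^ 2 / c ^ 2 := by
      gcongr
      nlinarith only [sq_nonneg v, hW0, hW1, hvv]
    have t0 : 0 ≤ v ^ 2 * W / (a * b) := by positivity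
    have t2 : |v ^ 2 * W / (a * b) - 9/64| ≤ C ^ 2 / c ^ 2 + 9/64 := by
      rw [abs_le]; constructor <;> linarith
    refine t2.trans ?_
    have t3 : 0 < C ^ 2 / c ^ 2 := by positivity
    have := mul_pos hM0 hE0
    nlinarith only [this, t3, hh]

lemma sum_inv_sqrt (N : ℕ) : ∑ m ∈ Finset.Icc 1 N, 1 / √(m : ℝ) ≤ 2 * √N := by
  induction N with
  | zero => simp
  | succ N ih =>
    rw [Finset.sum_Icc_succ_top (by omega)]
    push_cast
    have h1 : √((N : ℝ) + 1) ^ 2 = N + 1 := Real.sq_sqrt (by positivity)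
    have h2 : √(N : ℝ) ^ 2 = N := Real.sq_sqrt (by positivity)
    have h3 : 0 < √((N : ℝ) + 1) := Real.sqrt_pos.2 (by positivity)
    have h4 : 1 / √((N : ℝ) + 1) ≤ 2 * √((N : ℝ) + 1) - 2 * √N := by
      rw [div_le_iff₀ h3]
      nlinarith only [h1, h2, sq_nonneg (√((N : ℝ) + 1) - √N)]
    linarith

lemma sum_inv_sq (N : ℕ) : ∑ m ∈ Finset.Icc 1 N, 1 / (m : ℝ) ^ 2 ≤ 2 := by
  have := sum_Ioo_inv_sq_le (α := ℝ) 0 (N + 1)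
  rw [show Finset.Ioo 0 (N + 1) = Finset.Icc 1 N by ext; simp; omega] at this
  simpa using this

lemma row_bound (δ : ℕ → ℕ → ℝ) (C : ℝ) (hC : 0 < C)
    (key : ∀ k m : ℕ, 1 ≤ k → 1 ≤ m →
      |m * δ k (k + m) ^ 2 - 9/64| ≤ C * (1 / m + √m / √((k + m : ℕ) : ℝ))) (N : ℕ) :
    |∑ k ∈ Finset.Icc 1 N, δ k (N + 1) ^ 2 - 9/64 * (harmonic N : ℝ)| ≤ 4 * C := by
  have e1 : ∑ k ∈ Finset.Icc 1 N, δ k (N + 1) ^ 2 = ∑ m ∈ Finset.Icc 1 N, δ (N + 1 - m) (N + 1) ^ 2 := by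
    refine Finset.sum_nbij' (fun k => N + 1 - k) (fun k => N + 1 - k) ?_ ?_ ?_ ?_ ?_
    · intro k hk; simp only [Finset.mem_Icc] at *; omega
    · intro k hk; simp only [Finset.mem_Icc] at *; omega
    · intro k hk; simp only [Finset.mem_Icc] at *; omega
    · intro k hk; simp only [Finset.mem_Icc] at *; omega
    · intro k hk; simp only [Finset.mem_Icc] at *
      rw [show N + 1 - (N + 1 - k) = k by omega]
  have e2 : 9/64 * (harmonic N : ℝ) = ∑ m ∈ Finset.Icc 1 N, 9/64 * (1 / (m : ℝ)) := by
    rw [harmonic_eq_sum_Icc, ← Finset.mul_sum]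
    push_cast
    simp
  rw [e1, e2, ← Finset.sum_sub_distrib]
  refine (Finset.abs_sum_le_sum_abs _ _).trans ?_
  have hs0 : 0 < √((N + 1 : ℕ) : ℝ) := Real.sqrt_pos.2 (by positivity)
  have term : ∀ m ∈ Finset.Icc 1 N, |δ (N + 1 - m) (N + 1) ^ 2 - 9/64 * (1 / (m : ℝ))| ≤
      C * (1 / (m : ℝ) ^ 2) + C / √((N + 1 : ℕ) : ℝ) * (1 / √(m : ℝ)) := by
    intro m hm
    rw [Finset.mem_Icc] at hm
    have hm0 : (0 : ℝ) < m := by exact_mod_cast hm.1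
    have := key (N + 1 - m) m (by omega) hm.1
    rw [show N + 1 - m + m = N + 1 by omega] at this
    have hsm : 0 < √(m : ℝ) := Real.sqrt_pos.2 hm0
    have hss : √(m : ℝ) ^ 2 = m := Real.sq_sqrt hm0.le
    rw [show δ (N + 1 - m) (N + 1) ^ 2 - 9/64 * (1 / (m : ℝ)) =
      (m * δ (N + 1 - m) (N + 1) ^ 2 - 9/64) / m by field_simp, abs_div, abs_of_pos hm0,
      div_le_iff₀ hm0]
    refine this.trans (le_of_eq ?_)
    generalize √((N + 1 : ℕ) : ℝ) = L at *
    rw [add_mul, mul_add]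
    congr 1
    · field_simp
    · rw [← hss]; field_simp
      rw [hss]
      exact hss
  refine (Finset.sum_le_sum term).trans ?_
  rw [Finset.sum_add_distrib, ← Finset.mul_sum, ← Finset.mul_sum]
  have h1 := mul_le_mul_of_nonneg_left (sum_inv_sq N) hC.le
  have h2 : C / √((N + 1 : ℕ) : ℝ) * ∑ m ∈ Finset.Icc 1 N, 1 / √(m : ℝ) ≤ 2 * C := by
    have h3 : √(N : ℝ) ≤ √((N + 1 : ℕ) : ℝ) := Real.sqrt_le_sqrt (by push_cast; linarith)
    calc _ ≤ C / √((N + 1 : ℕ) : ℝ) * (2 * √((N + 1 : ℕ) : ℝ)) := by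
            gcongr; exact (sum_inv_sqrt N).trans (by linarith)
      _ = 2 * C := by field_simp
  linarith

lemma double_bound (δ : ℕ → ℕ → ℝ) (C : ℝ) (hsymm : ∀ k l, δ k l = δ l k)
    (hdiag : ∀ k, δ k k ^ 2 = 1)
    (hrow : ∀ N : ℕ, |∑ k ∈ Finset.Icc 1 N, δ k (N + 1) ^ 2 - 9/64 * (harmonic N : ℝ)| ≤ 4 * C)
    (N : ℕ) :
    |∑ k ∈ Finset.Icc 1 N, ∑ l ∈ Finset.Icc 1 N, δ k l ^ 2 - 9/32 * (N * (harmonic N : ℝ))| ≤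
      (8 * C + 1) * N := by
  induction N with
  | zero => simp
  | succ N ih =>
    have e : ∑ k ∈ Finset.Icc 1 (N + 1), ∑ l ∈ Finset.Icc 1 (N + 1), δ k l ^ 2 =
        ∑ k ∈ Finset.Icc 1 N, ∑ l ∈ Finset.Icc 1 N, δ k l ^ 2 +
          2 * ∑ k ∈ Finset.Icc 1 N, δ k (N + 1) ^ 2 + 1 := by
      rw [Finset.sum_Icc_succ_top (by omega)]
      simp_rw [Finset.sum_Icc_succ_top (show 1 ≤ N + 1 by omega)]
      rw [Finset.sum_add_distrib, hdiag]
      simp_rw [hsymm (N + 1)]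
      ring
    have e2 : ((N + 1 : ℕ) : ℝ) * (harmonic (N + 1) : ℝ) = N * (harmonic N : ℝ) + (harmonic N : ℝ) + 1 := by
      rw [harmonic_succ]
      push_cast
      have : (N : ℝ) + 1 ≠ 0 := by positivity
      field_simp
    rw [e, e2]
    have h := hrow N
    push_cast
    rw [abs_le] at *
    constructor <;> linarith [h.1, h.2, ih.1, ih.2]

lemma final_limit (S : ℕ → ℝ) (C x : ℝ) (hx : 0 < x)
    (hS : ∀ N : ℕ, |S N - 9/32 * (N * (harmonic N : ℝ))| ≤ C * N) :
    Tendsto (fun d : ℕ => (1 / ((d : ℝ) * Real.log d)) * S ⌊(d : ℝ) * x⌋₊) atTop (nhds (9 * x / 32)) := by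
  have hN : Tendsto (fun d : ℕ => (⌊(d : ℝ) * x⌋₊ : ℝ) / d) atTop (nhds x) := by
    have := (tendsto_nat_floor_mul_div_atTop (R := ℝ) hx.le).comp tendsto_natCast_atTop_atTop
    refine this.congr (fun d => ?_)
    simp [mul_comm]
  have hlog : Tendsto (fun d : ℕ => Real.log d) atTop atTop :=
    Real.tendsto_log_atTop.comp tendsto_natCast_atTop_atTop
  have hinv : Tendsto (fun d : ℕ => (Real.log d)⁻¹) atTop (nhds 0) := hlog.inv_tendsto_atTop
  have hlN : Tendsto (fun d : ℕ => Real.log ((⌊(d : ℝ) * x⌋₊ : ℝ) / d)) atTop (nhds (Real.log x)) :=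
    hN.log hx.ne'
  have hfl : Tendsto (fun d : ℕ => ⌊(d : ℝ) * x⌋₊) atTop atTop :=
    tendsto_nat_floor_atTop.comp (tendsto_natCast_atTop_atTop.atTop_mul_const hx)
  have hH : Tendsto (fun d : ℕ => (harmonic ⌊(d : ℝ) * x⌋₊ : ℝ) * (Real.log d)⁻¹) atTop (nhds 1) := by
    have h1 := (Real.tendsto_harmonic_sub_log.comp hfl).add hlN
    have h2 := (h1.mul hinv).add_const 1
    rw [mul_zero, zero_add] at h2
    refine h2.congr' ?_
    filter_upwards [hfl.eventually_ge_atTop 1, eventually_gt_atTop 0, hlog.eventually_gt_atTop 0] with d h3 h4 h5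
    have h3' : ((⌊(d : ℝ) * x⌋₊ : ℕ) : ℝ) ≠ 0 := by
      have : ⌊(d : ℝ) * x⌋₊ ≠ 0 := by omega
      exact_mod_cast this
    have h4' : (d : ℝ) ≠ 0 := by exact_mod_cast h4.ne'
    simp only [Function.comp]
    rw [Real.log_div h3' h4']
    field_simp
    ring
  have hmain := ((hN.mul hH).const_mul (9/32))
  have herr : Tendsto (fun d : ℕ => (1 / ((d : ℝ) * Real.log d)) * (S ⌊(d : ℝ) * x⌋₊ -
      9/32 * ((⌊(d : ℝ) * x⌋₊ : ℝ) * (harmonic ⌊(d : ℝ) * x⌋₊ : ℝ)))) atTop (nhds 0) := by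
    have hb := ((hN.mul hinv).const_mul C)
    rw [mul_zero, mul_zero] at hb
    refine squeeze_zero_norm' ?_ hb
    filter_upwards [eventually_gt_atTop 0, hlog.eventually_gt_atTop 0] with d h4 h5
    have h4' : (0 : ℝ) < d := by exact_mod_cast h4
    rw [Real.norm_eq_abs, abs_mul, abs_of_pos (by positivity)]
    calc _ ≤ 1 / ((d : ℝ) * Real.log d) * (C * (⌊(d : ℝ) * x⌋₊ : ℝ)) := by
            gcongr; exact hS _
      _ = _ := by field_simp
  have := hmain.add herr
  rw [show 9/32 * (x * 1) + 0 = 9 * x / 32 by ring] at this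
  refine this.congr (fun d => ?_)
  rw [one_div, mul_inv]
  ring

/-- if `α = 3/2` (so `β ∈ [3/4, 1)`), then
`lim_{d→∞} (1/(d ln d)) Σ_{k,l=1}^{⌊dx⌋} δ_{kl}² = 9x/32`. -/
theorem variance_limit_threehalf (β lam α ν : ℝ) (φ ψ : ℝ → ℝ)
    (hyp : SelfSimilarHyp β lam α ν φ ψ)
    (hΔ : ∀ k : ℕ, 0 < covΔ β φ k k)
    (a b x : ℝ) (ha : 0 < a) (hab : a < b) (hx : x ∈ Set.Icc a b)
    (hα : α = 3 / 2) :
    Tendsto (fun d : ℕ =>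
        (1 / ((d : ℝ) * Real.log d)) * ∑ k ∈ Finset.Icc 1 ⌊(d : ℝ) * x⌋₊,
          ∑ l ∈ Finset.Icc 1 ⌊(d : ℝ) * x⌋₊, covδ β φ k l ^ 2)
      atTop (nhds (9 * x / 32)) := by
  subst hα
  obtain ⟨C, hC, key⟩ := key_bound β lam ν φ ψ hyp hΔ
  have hdiag : ∀ k, covδ β φ k k ^ 2 = 1 := by
    intro k
    have h := hΔ k
    unfold covδ
    rw [div_pow, Real.sq_sqrt (by positivity)]
    field_simp
  exact final_limit (fun N => ∑ k ∈ Finset.Icc 1 N, ∑ l ∈ Finset.Icc 1 N, covδ β φ k l ^ 2)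
    (8 * C + 1) x (lt_of_lt_of_le ha hx.1)
    (double_bound (covδ β φ) C (covδ_symm β φ) hdiag (row_bound (covδ β φ) C hC key))
end
end

section
/- Let f, g : [0,1]² → ℝ be continuous. Then lim_{d,p→∞} d·p · Σ_{k=0}^{d−1} Σ_{j=0}^{p−1} g(k/d, j/p) · (∫_{k/d}^{(k+1)/d} ∫_{j/p}^{(j+1)/p} f(u,v) dv du)² = ∫_0^1 ∫_0^1 g(u,v) f(u,v)² du dv, where the limit is taken as both d and p tend to infinity. -/
open Filter intervalIntegral

lemma rsl_one (φ : ℝ → ℝ) (hφ : Continuous φ) (a b K ε : ℝ) (hab : a ≤ b)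
    (h : ∀ x ∈ Set.Icc a b, |φ x - K| ≤ ε) :
    |(∫ x in a..b, φ x) - K * (b - a)| ≤ ε * (b - a) := by
  have h1 : (∫ x in a..b, φ x) - K * (b - a) = ∫ x in a..b, (φ x - K) := by
    rw [intervalIntegral.integral_sub (hφ.intervalIntegrable _ _) (by simp)]
    simp [mul_comm]
  rw [h1]
  have h2 := intervalIntegral.norm_integral_le_of_norm_le_const (a := a) (b := b) (C := ε)
    (f := fun x => φ x - K) (by
      intro x hx
      rw [Set.uIoc_of_le hab] at hx
      exact h x ⟨hx.1.le, hx.2⟩)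
  rwa [abs_of_nonneg (sub_nonneg.2 hab), Real.norm_eq_abs] at h2

lemma rsl_cont (F : ℝ × ℝ → ℝ) (hF : Continuous F) (c e : ℝ) :
    Continuous (fun u => ∫ v in c..e, F (u, v)) :=
  intervalIntegral.continuous_parametric_intervalIntegral_of_continuous'
    (f := fun u v => F (u, v)) (by simpa [Function.uncurry_def] using hF) c e

lemma rsl_two (F : ℝ × ℝ → ℝ) (hF : Continuous F) (a b c e K ε : ℝ) (hab : a ≤ b) (hce : c ≤ e)
    (h : ∀ x ∈ Set.Icc a b, ∀ y ∈ Set.Icc c e, |F (x, y) - K| ≤ ε) :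
    |(∫ u in a..b, ∫ v in c..e, F (u, v)) - K * ((b - a) * (e - c))| ≤ ε * ((b - a) * (e - c)) := by
  have := rsl_one (fun u => ∫ v in c..e, F (u, v)) (rsl_cont F hF c e) a b (K * (e - c))
    (ε * (e - c)) hab (fun x hx => rsl_one (fun v => F (x, v)) (by fun_prop) c e K ε hce (h x hx))
  convert this using 1
  · congr 1; ring
  · ring

lemma rsl_split1 (φ : ℝ → ℝ) (hφ : Continuous φ) (d : ℕ) (hd : 0 < d) :
    ∑ k ∈ Finset.range d, ∫ u in ((k : ℝ) / d)..(((k : ℝ) + 1) / d), φ u = ∫ u in (0 : ℝ)..1, φ u := by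
  have := intervalIntegral.sum_integral_adjacent_intervals (μ := MeasureTheory.volume) (f := φ)
    (a := fun k : ℕ => (k : ℝ) / d) (n := d) (fun k _ => hφ.intervalIntegrable _ _)
  have hd' : (d : ℝ) ≠ 0 := by positivity
  simpa [hd'] using this

lemma rsl_split (H : ℝ × ℝ → ℝ) (hH : Continuous H) (d p : ℕ) (hd : 0 < d) (hp : 0 < p) :
    ∑ k ∈ Finset.range d, ∑ j ∈ Finset.range p,
      (∫ u in ((k : ℝ) / d)..(((k : ℝ) + 1) / d),
        ∫ v in ((j : ℝ) / p)..(((j : ℝ) + 1) / p), H (u, v)) =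
      ∫ u in (0 : ℝ)..1, ∫ v in (0 : ℝ)..1, H (u, v) := by
  rw [← rsl_split1 _ (rsl_cont H hH 0 1) d hd]
  refine Finset.sum_congr rfl fun k _ => ?_
  rw [← intervalIntegral.integral_finset_sum
    (fun j _ => (rsl_cont H hH _ _).intervalIntegrable _ _)]
  congr 1
  ext u
  exact rsl_split1 (fun v => H (u, v)) (by fun_prop) p hp

lemma rsl_pt (d k : ℕ) (hk : k < d) (x : ℝ) (hx : x ∈ Set.Icc ((k : ℝ) / d) (((k : ℝ) + 1) / d)) :
    x ∈ Set.Icc (0 : ℝ) 1 ∧ |x - (k : ℝ) / d| ≤ 1 / d := by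
  have hd : (0 : ℝ) < d := by exact_mod_cast (by omega : 0 < d)
  have h1 : ((k : ℝ) + 1) / d ≤ 1 := by
    rw [div_le_one hd]; exact_mod_cast hk
  have h0 : 0 ≤ (k : ℝ) / d := by positivity
  refine ⟨⟨h0.trans hx.1, hx.2.trans h1⟩, ?_⟩
  rw [abs_of_nonneg (sub_nonneg.2 hx.1)]
  have := hx.2
  rw [add_div] at this
  linarith

lemma rsl_unif (F : ℝ × ℝ → ℝ) (hF : Continuous F) (ε : ℝ) (hε : 0 < ε) :
    ∃ δ > 0, ∀ d p k j : ℕ, k < d → j < p → 1 / (d : ℝ) < δ → 1 / (p : ℝ) < δ →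
      ∀ x ∈ Set.Icc ((k : ℝ) / d) (((k : ℝ) + 1) / d),
      ∀ y ∈ Set.Icc ((j : ℝ) / p) (((j : ℝ) + 1) / p),
        |F (x, y) - F ((k : ℝ) / d, (j : ℝ) / p)| ≤ ε := by
  have hc : IsCompact (Set.Icc (0 : ℝ) 1 ×ˢ Set.Icc (0 : ℝ) 1) := isCompact_Icc.prod isCompact_Icc
  have hu := hc.uniformContinuousOn_of_continuous hF.continuousOn
  rw [Metric.uniformContinuousOn_iff] at hu
  obtain ⟨δ, hδ, h⟩ := hu ε hε
  refine ⟨δ, hδ, fun d p k j hk hj hd hp x hx y hy => ?_⟩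
  have h1 := rsl_pt d k hk x hx
  have h2 := rsl_pt p j hj y hy
  have h3 := rsl_pt d k hk (k / d) ⟨le_rfl, by gcongr; linarith⟩
  have h4 := rsl_pt p j hj (j / p) ⟨le_rfl, by gcongr; linarith⟩
  refine (h (x, y) ⟨h1.1, h2.1⟩ (_, _) ⟨h3.1, h4.1⟩ ?_).le
  rw [Prod.dist_eq]
  exact max_lt (h1.2.trans_lt hd) (h2.2.trans_lt hp)

lemma rsl_bdd (F : ℝ × ℝ → ℝ) (hF : Continuous F) :
    ∃ M, 0 ≤ M ∧ ∀ x ∈ Set.Icc (0 : ℝ) 1, ∀ y ∈ Set.Icc (0 : ℝ) 1, |F (x, y)| ≤ M := by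
  have hc : IsCompact (Set.Icc (0 : ℝ) 1 ×ˢ Set.Icc (0 : ℝ) 1) := isCompact_Icc.prod isCompact_Icc
  obtain ⟨M, hM⟩ := hc.exists_bound_of_continuousOn hF.continuousOn
  exact ⟨max M 0, le_max_right _ _, fun x hx y hy => (hM (x, y) ⟨hx, hy⟩).trans (le_max_left _ _)⟩

lemma rsl_alg (D P I J F0 G0 M N ε : ℝ) (hD : 0 < D) (hP : 0 < P) (hε : 0 ≤ ε)
    (hN : 0 ≤ N) (hF0 : |F0| ≤ M) (hG0 : |G0| ≤ N)
    (hI0 : |I| ≤ M * (1 / D * (1 / P)))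
    (hI : |I - F0 * (1 / D * (1 / P))| ≤ ε * (1 / D * (1 / P)))
    (hJ : |J - G0 * F0 ^ 2 * (1 / D * (1 / P))| ≤ ε * (1 / D * (1 / P))) :
    |D * P * (G0 * I ^ 2) - J| ≤ ε * (1 + 2 * M * N) * (1 / D * (1 / P)) := by
  set w := 1 / D * (1 / P) with hw
  have hwp : 0 < w := by positivity
  have hDP : D * P = 1 / w := by rw [hw]; field_simp
  obtain ⟨c, rfl⟩ : ∃ c, I = c * w := ⟨I / w, by field_simp⟩
  have h1 : |c| ≤ M := by
    rw [abs_mul, abs_of_pos hwp] at hI0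
    exact le_of_mul_le_mul_right hI0 hwp
  have h2 : |c - F0| ≤ ε := by
    rw [← sub_mul, abs_mul, abs_of_pos hwp] at hI
    exact le_of_mul_le_mul_right hI hwp
  have h3 : |c + F0| ≤ 2 * M := (abs_add_le _ _).trans (by linarith)
  have h4 : D * P * (G0 * (c * w) ^ 2) - J
      = G0 * ((c - F0) * (c + F0)) * w - (J - G0 * F0 ^ 2 * w) := by
    rw [hDP]; field_simp; ring
  rw [h4]
  refine (abs_sub _ _).trans ?_
  rw [abs_mul, abs_mul, abs_mul, abs_of_pos hwp]
  have h5 : |G0| * (|c - F0| * |c + F0|) ≤ N * (ε * (2 * M)) := by gcongr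
  have := mul_le_mul_of_nonneg_right h5 hwp.le
  nlinarith

lemma rsl_main (F G : ℝ × ℝ → ℝ) (hF : Continuous F) (hG : Continuous G) :
    Tendsto (fun dp : ℕ × ℕ =>
        (dp.1 : ℝ) * (dp.2 : ℝ) *
          ∑ k ∈ Finset.range dp.1, ∑ j ∈ Finset.range dp.2,
            G ((k : ℝ) / dp.1, (j : ℝ) / dp.2) *
              (∫ u in ((k : ℝ) / dp.1)..(((k : ℝ) + 1) / dp.1),
                ∫ v in ((j : ℝ) / dp.2)..(((j : ℝ) + 1) / dp.2), F (u, v)) ^ 2)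
      (atTop ×ˢ atTop)
      (nhds (∫ u in (0 : ℝ)..1, ∫ v in (0 : ℝ)..1, G (u, v) * F (u, v) ^ 2)) := by
  obtain ⟨M, hM0, hM⟩ := rsl_bdd F hF
  obtain ⟨N, hN0, hN⟩ := rsl_bdd G hG
  have hH : Continuous (fun x => G x * F x ^ 2) := by fun_prop
  rw [Metric.tendsto_nhds]
  intro ε hε
  have hC : 0 < 1 + 2 * M * N := by positivity
  set η := ε / (2 * (1 + 2 * M * N)) with hη
  have hηp : 0 < η := by positivity
  obtain ⟨δ₁, hδ₁, h1⟩ := rsl_unif F hF η hηp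
  obtain ⟨δ₂, hδ₂, h2⟩ := rsl_unif _ hH η hηp
  have hev : ∀ᶠ d : ℕ in atTop, 0 < d ∧ 1 / (d : ℝ) < δ₁ ∧ 1 / (d : ℝ) < δ₂ := by
    have ht := tendsto_one_div_atTop_nhds_zero_nat (𝕜 := ℝ)
    exact (eventually_gt_atTop 0).and
      ((ht.eventually_lt_const hδ₁).and (ht.eventually_lt_const hδ₂))
  filter_upwards [hev.prod_mk hev]
  rintro ⟨d, p⟩ ⟨⟨hd, hd1, hd2⟩, ⟨hp, hp1, hp2⟩⟩
  dsimp only at *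
  have hd' : (0 : ℝ) < d := by exact_mod_cast hd
  have hp' : (0 : ℝ) < p := by exact_mod_cast hp
  rw [Real.dist_eq, ← rsl_split _ hH d p hd hp, Finset.mul_sum, ← Finset.sum_sub_distrib]
  have key : ∀ k ∈ Finset.range d, |(d : ℝ) * p * (∑ j ∈ Finset.range p,
            G ((k : ℝ) / d, (j : ℝ) / p) *
              (∫ u in ((k : ℝ) / d)..(((k : ℝ) + 1) / d),
                ∫ v in ((j : ℝ) / p)..(((j : ℝ) + 1) / p), F (u, v)) ^ 2) -
      ∑ j ∈ Finset.range p, (∫ u in ((k : ℝ) / d)..(((k : ℝ) + 1) / d),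
        ∫ v in ((j : ℝ) / p)..(((j : ℝ) + 1) / p), G (u, v) * F (u, v) ^ 2)|
      ≤ ∑ j ∈ Finset.range p, η * (1 + 2 * M * N) * (1 / (d : ℝ) * (1 / (p : ℝ))) := by
    intro k hk
    rw [Finset.mul_sum, ← Finset.sum_sub_distrib]
    refine (Finset.abs_sum_le_sum_abs _ _).trans (Finset.sum_le_sum fun j hj => ?_)
    have hk := Finset.mem_range.1 hk
    have hj := Finset.mem_range.1 hj
    have a1 : (k : ℝ) / d ≤ (k + 1) / d := by gcongr; linarith
    have a2 : (j : ℝ) / p ≤ (j + 1) / p := by gcongr; linarith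
    have e1 : ((k : ℝ) + 1) / d - k / d = 1 / d := by ring
    have e2 : ((j : ℝ) + 1) / p - j / p = 1 / p := by ring
    have m1 := (rsl_pt d k hk (k / d) ⟨le_rfl, a1⟩).1
    have m2 := (rsl_pt p j hj (j / p) ⟨le_rfl, a2⟩).1
    have b0 := rsl_two F hF _ _ _ _ 0 M a1 a2 (fun x hx y hy => by
      rw [sub_zero]; exact hM x (rsl_pt d k hk x hx).1 y (rsl_pt p j hj y hy).1)
    have b1 := rsl_two F hF _ _ _ _ _ η a1 a2 (h1 d p k j hk hj hd1 hp1)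
    have b2 := rsl_two _ hH _ _ _ _ _ η a1 a2 (h2 d p k j hk hj hd2 hp2)
    rw [e1, e2] at b0 b1 b2
    rw [zero_mul, sub_zero] at b0
    exact rsl_alg d p _ _ _ _ M N η hd' hp' hηp.le hN0 (hM _ m1 _ m2) (hN _ m1 _ m2) b0 b1 b2
  refine ((Finset.abs_sum_le_sum_abs _ _).trans (Finset.sum_le_sum key)).trans_lt ?_
  simp only [Finset.sum_const, Finset.card_range, nsmul_eq_mul]
  have : (d : ℝ) * (p * (η * (1 + 2 * M * N) * (1 / (d : ℝ) * (1 / (p : ℝ))))) = ε / 2 := by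
    rw [hη]; field_simp
  rw [this]
  linarith

lemma rsl_ext (f : ℝ × ℝ → ℝ) (hf : ContinuousOn f (Set.Icc 0 1 ×ˢ Set.Icc 0 1)) :
    ∃ F : ℝ × ℝ → ℝ, Continuous F ∧
      ∀ x ∈ Set.Icc (0 : ℝ) 1, ∀ y ∈ Set.Icc (0 : ℝ) 1, f (x, y) = F (x, y) := by
  refine ⟨fun x => f (max 0 (min 1 x.1), max 0 (min 1 x.2)), ?_, ?_⟩
  · refine hf.comp_continuous (by fun_prop) fun x => ?_
    simp
  · intro x hx y hy
    simp [hx.1, hx.2, hy.1, hy.2]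

lemma rsl_congr (f F : ℝ × ℝ → ℝ) (a b c e : ℝ) (hab : a ≤ b) (hce : c ≤ e)
    (h : ∀ x ∈ Set.Icc a b, ∀ y ∈ Set.Icc c e, f (x, y) = F (x, y)) :
    (∫ u in a..b, ∫ v in c..e, f (u, v)) = ∫ u in a..b, ∫ v in c..e, F (u, v) := by
  refine intervalIntegral.integral_congr fun u hu => intervalIntegral.integral_congr fun v hv => ?_
  rw [Set.uIcc_of_le hab] at hu
  rw [Set.uIcc_of_le hce] at hv
  exact h u hu v hv

/-- for continuous `f, g : [0,1]² → ℝ`,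
`lim_{d,p→∞} dp Σ_{k=0}^{d−1} Σ_{j=0}^{p−1} g(k/d, j/p)
  (∫_{k/d}^{(k+1)/d} ∫_{j/p}^{(j+1)/p} f(u,v) dv du)²
  = ∫_0^1 ∫_0^1 g(u,v) f(u,v)² du dv`. -/
theorem riemann_square_limit (f g : ℝ × ℝ → ℝ)
    (hf : ContinuousOn f (Set.Icc 0 1 ×ˢ Set.Icc 0 1))
    (hg : ContinuousOn g (Set.Icc 0 1 ×ˢ Set.Icc 0 1)) :
    Tendsto (fun dp : ℕ × ℕ =>
        (dp.1 : ℝ) * (dp.2 : ℝ) *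
          ∑ k ∈ Finset.range dp.1, ∑ j ∈ Finset.range dp.2,
            g ((k : ℝ) / dp.1, (j : ℝ) / dp.2) *
              (∫ u in ((k : ℝ) / dp.1)..(((k : ℝ) + 1) / dp.1),
                ∫ v in ((j : ℝ) / dp.2)..(((j : ℝ) + 1) / dp.2), f (u, v)) ^ 2)
      (atTop ×ˢ atTop)
      (nhds (∫ u in (0 : ℝ)..1, ∫ v in (0 : ℝ)..1, g (u, v) * f (u, v) ^ 2)) := by
  obtain ⟨F, hF, hfF⟩ := rsl_ext f hf
  obtain ⟨G, hG, hgG⟩ := rsl_ext g hg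
  have hlim := rsl_congr (fun x => g x * f x ^ 2) (fun x => G x * F x ^ 2) 0 1 0 1
    zero_le_one zero_le_one (fun x hx y hy => by
      simp only [hfF x hx y hy, hgG x hx y hy])
  rw [hlim]
  refine (rsl_main F G hF hG).congr ?_
  rintro ⟨d, p⟩
  dsimp only
  congr 1
  refine Finset.sum_congr rfl fun k hk => Finset.sum_congr rfl fun j hj => ?_
  have hk := Finset.mem_range.1 hk
  have hj := Finset.mem_range.1 hj
  have a1 : (k : ℝ) / d ≤ (k + 1) / d := by gcongr; linarith
  have a2 : (j : ℝ) / p ≤ (j + 1) / p := by gcongr; linarith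
  have m1 := (rsl_pt d k hk (k / d) ⟨le_rfl, a1⟩).1
  have m2 := (rsl_pt p j hj (j / p) ⟨le_rfl, a2⟩).1
  rw [hgG _ m1 _ m2, rsl_congr f F _ _ _ _ a1 a2 (fun x hx y hy =>
    hfF x (rsl_pt d k hk x hx).1 y (rsl_pt p j hj y hy).1)]
end

section
/- Let f, g : [0,1]² → ℝ be continuous and let d ≥ 1 be a fixed integer. Then lim_{p→∞} d·p · Σ_{k=0}^{d−1} Σ_{j=0}^{p−1} g(k/d, j/p) · (∫_{k/d}^{(k+1)/d} ∫_{j/p}^{(j+1)/p} f(u,v) dv du)² = d · Σ_{k=0}^{d−1} ∫_0^1 g(k/d, v) (∫_{k/d}^{(k+1)/d} f(u,v) du)² dv. -/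
open Filter intervalIntegral

lemma aux_mvt (h : ℝ → ℝ) (hh : Continuous h) (a b : ℝ) :
    ∃ c ∈ Set.uIcc a b, ∫ v in a..b, h v = h c * (b - a) := by
  obtain ⟨c, hc, e⟩ := exists_eq_const_mul_intervalIntegral_of_ae_nonneg
    (μ := MeasureTheory.volume) (f := h) (g := fun _ => (1 : ℝ)) (a := a) (b := b)
    hh.continuousOn (by simp) (by simp)
  refine ⟨c, hc, ?_⟩
  simpa using e

lemma aux_lim (γ h : ℝ → ℝ) (hγ : Continuous γ) (hh : Continuous h) :
    Tendsto (fun p : ℕ => (p : ℝ) * ∑ j ∈ Finset.range p,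
      γ ((j : ℝ) / p) * (∫ v in ((j : ℝ) / p)..(((j : ℝ) + 1) / p), h v) ^ 2)
      atTop (nhds (∫ v in (0 : ℝ)..1, γ v * h v ^ 2)) := by
  rw [Metric.tendsto_atTop]
  intro ε hε
  have huc : UniformContinuousOn (fun x : ℝ × ℝ => γ x.1 * h x.2 ^ 2)
      (Set.Icc 0 1 ×ˢ Set.Icc 0 1) :=
    (isCompact_Icc.prod isCompact_Icc).uniformContinuousOn_of_continuous (by fun_prop)
  rw [Metric.uniformContinuousOn_iff] at huc
  obtain ⟨δ, hδ, H⟩ := huc (ε / 2) (by positivity)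
  obtain ⟨N, hN⟩ := exists_nat_gt (1 / δ)
  refine ⟨N + 1, fun p hp => ?_⟩
  have hp0 : (0 : ℝ) < p := by exact_mod_cast (by omega : 0 < p)
  have hNp : (N : ℝ) ≤ p := by exact_mod_cast (by omega : N ≤ p)
  have hpδ : 1 / (p : ℝ) < δ := by
    rw [div_lt_comm₀ hp0 hδ]; linarith
  have hcell : ∀ j : ℕ, ((j : ℝ) + 1) / p - (j : ℝ) / p = 1 / p := by intro j; ring
  have hsum : ∫ v in (0 : ℝ)..1, γ v * h v ^ 2 =
      ∑ j ∈ Finset.range p, ∫ v in ((j : ℝ) / p)..(((j : ℝ) + 1) / p), γ v * h v ^ 2 := by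
    have := sum_integral_adjacent_intervals (μ := MeasureTheory.volume)
      (f := fun v => γ v * h v ^ 2) (a := fun j : ℕ => (j : ℝ) / p) (n := p)
      (fun k _ => Continuous.intervalIntegrable (by fun_prop) _ _)
    simp only [Nat.cast_zero, zero_div, div_self hp0.ne', Nat.cast_add, Nat.cast_one] at this
    exact this.symm
  rw [hsum, Finset.mul_sum, dist_eq_norm, ← Finset.sum_sub_distrib]
  have key : ∀ j ∈ Finset.range p,
      ‖(p : ℝ) * (γ ((j : ℝ) / p) * (∫ v in ((j : ℝ) / p)..(((j : ℝ) + 1) / p), h v) ^ 2) -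
        ∫ v in ((j : ℝ) / p)..(((j : ℝ) + 1) / p), γ v * h v ^ 2‖ ≤ ε / 2 * (1 / p) := by
    intro j hj
    have hj' : (j : ℝ) + 1 ≤ p := by exact_mod_cast Finset.mem_range.1 hj
    have h0 : 0 ≤ (j : ℝ) / p := by positivity
    have h1 : ((j : ℝ) + 1) / p ≤ 1 := by rw [div_le_one hp0]; exact hj'
    have hc' := hcell j
    have hpp : 0 < 1 / (p : ℝ) := by positivity
    have hle : (j : ℝ) / p ≤ ((j : ℝ) + 1) / p := by linarith
    obtain ⟨c, hc, e⟩ := aux_mvt h hh ((j : ℝ) / p) (((j : ℝ) + 1) / p)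
    rw [Set.uIcc_of_le hle] at hc
    have e2 : (p : ℝ) * (γ ((j : ℝ) / p) *
        (∫ v in ((j : ℝ) / p)..(((j : ℝ) + 1) / p), h v) ^ 2) =
        ∫ v in ((j : ℝ) / p)..(((j : ℝ) + 1) / p), γ ((j : ℝ) / p) * h c ^ 2 := by
      rw [e, intervalIntegral.integral_const, hc', smul_eq_mul]
      field_simp
    rw [e2, ← intervalIntegral.integral_sub (by simp)
      (Continuous.intervalIntegrable (by fun_prop) _ _)]
    refine (intervalIntegral.norm_integral_le_of_norm_le_const (C := ε / 2) ?_).trans ?_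
    · intro v hv
      rw [Set.uIoc_of_le hle] at hv
      have := H ((j : ℝ) / p, c) ⟨⟨h0, by linarith⟩, ⟨by linarith [hc.1], by linarith [hc.2]⟩⟩
        (v, v) ⟨⟨by linarith [hv.1], by linarith [hv.2]⟩, ⟨by linarith [hv.1], by linarith [hv.2]⟩⟩
        (by
          rw [Prod.dist_eq, max_lt_iff, Real.dist_eq, Real.dist_eq, abs_lt, abs_lt]
          obtain ⟨a1, a2⟩ := hv
          obtain ⟨a3, a4⟩ := hc
          refine ⟨⟨?_, ?_⟩, ⟨?_, ?_⟩⟩ <;> dsimp only <;> linarith)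
      rw [dist_eq_norm] at this
      exact this.le
    · rw [hc', abs_of_pos hpp]
  calc _ ≤ ∑ j ∈ Finset.range p, ε / 2 * (1 / (p : ℝ)) := norm_sum_le_of_le _ key
    _ = ε / 2 := by simp; field_simp
    _ < ε := by linarith

lemma aux_ext (f : ℝ × ℝ → ℝ) (hf : ContinuousOn f (Set.Icc 0 1 ×ˢ Set.Icc 0 1)) :
    ∃ F : ℝ × ℝ → ℝ, Continuous F ∧
      ∀ u ∈ Set.Icc (0 : ℝ) 1, ∀ v ∈ Set.Icc (0 : ℝ) 1, F (u, v) = f (u, v) := by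
  refine ⟨fun x => f (max 0 (min 1 x.1), max 0 (min 1 x.2)), ?_, ?_⟩
  · refine hf.comp_continuous (by fun_prop) (fun x => ?_)
    exact ⟨⟨le_max_left _ _, max_le zero_le_one (min_le_left _ _)⟩,
      ⟨le_max_left _ _, max_le zero_le_one (min_le_left _ _)⟩⟩
  · rintro u ⟨hu0, hu1⟩ v ⟨hv0, hv1⟩
    simp [hu0, hu1, hv0, hv1]



/-- for continuous `f, g : [0,1]² → ℝ` and fixed `d ≥ 1`,
`lim_{p→∞} dp Σ_{k=0}^{d−1} Σ_{j=0}^{p−1} g(k/d, j/p)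
  (∫_{k/d}^{(k+1)/d} ∫_{j/p}^{(j+1)/p} f(u,v) dv du)²
  = d Σ_{k=0}^{d−1} ∫_0^1 g(k/d, v) (∫_{k/d}^{(k+1)/d} f(u,v) du)² dv`. -/
theorem riemann_square_limit_one_sided (f g : ℝ × ℝ → ℝ)
    (hf : ContinuousOn f (Set.Icc 0 1 ×ˢ Set.Icc 0 1))
    (hg : ContinuousOn g (Set.Icc 0 1 ×ˢ Set.Icc 0 1))
    (d : ℕ) (hd : 1 ≤ d) :
    Tendsto (fun p : ℕ =>
        (d : ℝ) * (p : ℝ) *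
          ∑ k ∈ Finset.range d, ∑ j ∈ Finset.range p,
            g ((k : ℝ) / d, (j : ℝ) / p) *
              (∫ u in ((k : ℝ) / d)..(((k : ℝ) + 1) / d),
                ∫ v in ((j : ℝ) / p)..(((j : ℝ) + 1) / p), f (u, v)) ^ 2)
      atTop
      (nhds ((d : ℝ) * ∑ k ∈ Finset.range d,
        ∫ v in (0 : ℝ)..1, g ((k : ℝ) / d, v) *
          (∫ u in ((k : ℝ) / d)..(((k : ℝ) + 1) / d), f (u, v)) ^ 2)) := by
  obtain ⟨F, hF, hFf⟩ := aux_ext f hf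
  obtain ⟨G, hG, hGg⟩ := aux_ext g hg
  have hd0 : (0 : ℝ) < d := by exact_mod_cast hd
  have main : ∀ k ∈ Finset.range d, Tendsto (fun p : ℕ => (p : ℝ) * ∑ j ∈ Finset.range p,
            g ((k : ℝ) / d, (j : ℝ) / p) *
              (∫ u in ((k : ℝ) / d)..(((k : ℝ) + 1) / d),
                ∫ v in ((j : ℝ) / p)..(((j : ℝ) + 1) / p), f (u, v)) ^ 2) atTop
      (nhds (∫ v in (0 : ℝ)..1, g ((k : ℝ) / d, v) *
          (∫ u in ((k : ℝ) / d)..(((k : ℝ) + 1) / d), f (u, v)) ^ 2)) := by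
    intro k hk
    have sub : ∀ (n i : ℕ), i ∈ Finset.range n →
        (i : ℝ) / n ∈ Set.Icc (0 : ℝ) 1 ∧
        Set.uIcc ((i : ℝ) / n) (((i : ℝ) + 1) / n) ⊆ Set.Icc (0 : ℝ) 1 := by
      intro n i hi
      have hi' : (i : ℝ) + 1 ≤ n := by exact_mod_cast Finset.mem_range.1 hi
      have hn : (0 : ℝ) < n := by have : (0 : ℝ) ≤ i := Nat.cast_nonneg i; linarith
      have h0 : 0 ≤ (i : ℝ) / n := by positivity
      have h1 : ((i : ℝ) + 1) / n ≤ 1 := by rw [div_le_one hn]; exact hi'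
      have h2 : (i : ℝ) / n ≤ ((i : ℝ) + 1) / n := by gcongr; linarith
      refine ⟨⟨h0, h2.trans h1⟩, ?_⟩
      rw [Set.uIcc_of_le h2]
      exact Set.Icc_subset_Icc h0 h1
    have hkd := sub d k hk
    have hc : Continuous (fun v : ℝ => ∫ u in ((k : ℝ) / d)..(((k : ℝ) + 1) / d), F (u, v)) :=
      intervalIntegral.continuous_parametric_intervalIntegral_of_continuous'
        (f := fun v u => F (u, v)) (by fun_prop) _ _
    have L := aux_lim (fun v => G ((k : ℝ) / d, v)) _ (by fun_prop) hc
    have e1 : (∫ v in (0 : ℝ)..1, g ((k : ℝ) / d, v) *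
          (∫ u in ((k : ℝ) / d)..(((k : ℝ) + 1) / d), f (u, v)) ^ 2) =
        ∫ v in (0 : ℝ)..1, G ((k : ℝ) / d, v) *
          (∫ u in ((k : ℝ) / d)..(((k : ℝ) + 1) / d), F (u, v)) ^ 2 := by
      apply intervalIntegral.integral_congr
      intro v hv
      rw [Set.uIcc_of_le zero_le_one] at hv
      dsimp only
      rw [hGg _ hkd.1 _ hv]
      congr 2
      apply intervalIntegral.integral_congr
      intro u hu
      exact (hFf _ (hkd.2 hu) _ hv).symm
    rw [e1]
    refine L.congr (fun p => ?_)
    congr 1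
    refine Finset.sum_congr rfl (fun j hj => ?_)
    have hjp := sub p j hj
    rw [hGg _ hkd.1 _ hjp.1]
    congr 2
    rw [← MeasureTheory.intervalIntegral_intervalIntegral_swap (F := fun u v => F (u, v))]
    · apply intervalIntegral.integral_congr
      intro u hu
      apply intervalIntegral.integral_congr
      intro v hv
      exact hFf _ (hkd.2 hu) _ (hjp.2 hv)
    · have : Function.uncurry (fun u v => F (u, v)) = F := rfl
      rw [this]
      exact (hF.continuousOn.integrableOn_compact (isCompact_uIcc.prod isCompact_uIcc)).mono_set
        (Set.prod_mono Set.uIoc_subset_uIcc Set.uIoc_subset_uIcc)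
  refine ((tendsto_finsetSum _ main).const_mul (d : ℝ)).congr (fun p => ?_)
  rw [← Finset.mul_sum, mul_assoc]
end

section
/- Suppose 3/2 < α < 2. Then for every x > 0, the function (s,t) ↦ (st)^{α−2β} (∂_s∂_t R(s,t))², defined off the diagonal {s = t}, is Lebesgue integrable on (0,x)²; that is, ∫_0^x ∫_0^x (st)^{α−2β} (∂_s∂_t R(s,t))² ds dt < ∞. -/
open MeasureTheory ProbabilityTheory Filter

noncomputable section

/-- The mixed partial derivative `∂_s ∂_t R(s,t)` (first in `t`, then in `s`),
where `R` is the covariance function `covR`. -/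
def mixedPartialR (β : ℝ) (φ : ℝ → ℝ) (s t : ℝ) : ℝ :=
  deriv (fun u : ℝ => deriv (fun v : ℝ => covR β φ u v) t) s

lemma aux_diff (β lam α ν : ℝ) (φ ψ : ℝ → ℝ) (hyp : SelfSimilarHyp β lam α ν φ ψ)
    (y : ℝ) (hy : 1 < y) :
    HasDerivAt φ (-lam * (α * (y - 1) ^ (α - 1)) + deriv ψ y) y ∧
    HasDerivAt (deriv φ)
      (-lam * (α * ((α - 1) * (y - 1) ^ (α - 2))) + deriv (deriv ψ) y) y := by
  obtain ⟨-, -, -, -, hφ, ⟨S, hSo, hS1, hS⟩, -⟩ := hyp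
  have key : ∀ z : ℝ, 1 < z →
      HasDerivAt φ (-lam * (α * (z - 1) ^ (α - 1)) + deriv ψ z) z := by
    intro z hz
    have h1 : HasDerivAt (fun w : ℝ => (w - 1) ^ α) (α * (z - 1) ^ (α - 1)) z := by
      have := ((hasDerivAt_id z).sub_const 1).rpow_const (p := α)
        (Or.inl (by simp only [id]; linarith))
      simpa using this
    have h2 := (h1.const_mul (-lam)).add (hS z (hS1 hz.le)).1.hasDerivAt
    refine h2.congr_of_eventuallyEq ?_
    filter_upwards [lt_mem_nhds hz] with w hw
    simpa using hφ w hw.le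
  refine ⟨key y hy, ?_⟩
  have h1 : HasDerivAt (fun w : ℝ => (w - 1) ^ (α - 1)) ((α - 1) * (y - 1) ^ (α - 2)) y := by
    have := ((hasDerivAt_id y).sub_const 1).rpow_const (p := α - 1)
      (Or.inl (by simp only [id]; linarith))
    have e : α - 1 - 1 = α - 2 := by ring
    simpa [e] using this
  have h2 := ((h1.const_mul α).const_mul (-lam)).add (hS y (hS1 hy.le)).2.hasDerivAt
  refine h2.congr_of_eventuallyEq ?_
  filter_upwards [lt_mem_nhds hy] with w hw
  simpa using (key w hw).deriv

def auxG (β : ℝ) (φ : ℝ → ℝ) (y : ℝ) : ℝ :=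
  (2 * β - 1) * deriv φ y - y * deriv (deriv φ) y

lemma aux_bound (β lam α ν : ℝ) (φ ψ : ℝ → ℝ) (hyp : SelfSimilarHyp β lam α ν φ ψ)
    (hα1 : 3 / 2 < α) (hα2 : α < 2) :
    ∃ C : ℝ, 0 ≤ C ∧ ∀ y : ℝ, 1 < y → |auxG β φ y| ≤ C * (y - 1) ^ (α - 2) := by
  have hd := aux_diff β lam α ν φ ψ hyp
  obtain ⟨⟨hb0, hb1⟩, hlam, -, -, -, -, ⟨C₀, hC0, ha, hb⟩, -, ⟨C₁, hC1, hc⟩⟩ := hyp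
  have hβ : |2 * β - 1| ≤ 1 := by rw [abs_le]; constructor <;> linarith
  have hG : ∀ y : ℝ, 1 < y → |auxG β φ y| ≤ |deriv φ y| + y * |deriv (deriv φ) y| := by
    intro y hy
    unfold auxG
    refine (abs_sub _ _).trans ?_
    rw [abs_mul, abs_mul, abs_of_pos (by linarith : 0 < y)]
    nlinarith [abs_nonneg (deriv φ y)]
  have hla : 0 ≤ lam * α := by positivity
  have hla1 : 0 ≤ lam * α * (α - 1) := mul_nonneg hla (by linarith)
  refine ⟨(lam * α + 2 * C₀ + 2 * (lam * α * (α - 1) + C₀)) + 3 * C₁, by linarith, ?_⟩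
  intro y hy
  have hy1 : 0 < y - 1 := by linarith
  have hP : 0 < (y - 1) ^ (α - 2) := Real.rpow_pos_of_pos hy1 _
  refine (hG y hy).trans ?_
  rcases lt_or_ge y 2 with h2 | h2
  · have hP1 : 1 ≤ (y - 1) ^ (α - 2) :=
      Real.one_le_rpow_of_pos_of_le_one_of_nonpos hy1 (by linarith) (by linarith)
    have hQ1 : (y - 1) ^ (α - 1) ≤ 1 := Real.rpow_le_one hy1.le (by linarith) (by linarith)
    have hQ0 : 0 < (y - 1) ^ (α - 1) := Real.rpow_pos_of_pos hy1 _
    have hY : y ^ (α - 1) ≤ 2 := by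
      calc y ^ (α - 1) ≤ y ^ (1 : ℝ) := Real.rpow_le_rpow_of_exponent_le hy.le (by linarith)
        _ ≤ 2 := by rw [Real.rpow_one]; linarith
    have hinv : y⁻¹ ≤ 1 := inv_le_one_of_one_le₀ hy.le
    have hinv0 : 0 < y⁻¹ := by positivity
    have e1 : |deriv φ y| ≤ lam * α + 2 * C₀ := by
      rw [(hd y hy).1.deriv]
      refine (abs_add_le _ _).trans ?_
      have : |-lam * (α * (y - 1) ^ (α - 1))| = lam * α * (y - 1) ^ (α - 1) := by
        rw [show -lam * (α * (y - 1) ^ (α - 1)) = -(lam * α * (y - 1) ^ (α - 1)) by ring,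
          abs_neg, abs_of_nonneg (by positivity)]
      rw [this]
      have := ha y hy
      nlinarith
    have e2 : |deriv (deriv φ) y| ≤ lam * α * (α - 1) * (y - 1) ^ (α - 2) + C₀ := by
      rw [(hd y hy).2.deriv]
      refine (abs_add_le _ _).trans ?_
      have : |-lam * (α * ((α - 1) * (y - 1) ^ (α - 2)))|
          = lam * α * (α - 1) * (y - 1) ^ (α - 2) := by
        rw [show -lam * (α * ((α - 1) * (y - 1) ^ (α - 2)))
          = -(lam * α * (α - 1) * (y - 1) ^ (α - 2)) by ring,
          abs_neg, abs_of_nonneg (by positivity)]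
      rw [this]
      have h3 := hb y hy
      have h4 : C₀ * y⁻¹ * (y - 1) ^ (α - 1) ≤ C₀ := by
        have : y⁻¹ * (y - 1) ^ (α - 1) ≤ 1 := mul_le_one₀ hinv hQ0.le hQ1
        nlinarith
      linarith
    have e3 : y * |deriv (deriv φ) y| ≤ 2 * (lam * α * (α - 1) * (y - 1) ^ (α - 2) + C₀) := by
      refine mul_le_mul h2.le e2 (abs_nonneg _) (by norm_num)
    nlinarith [mul_nonneg hla (sub_nonneg.2 hP1), mul_nonneg hC0 (sub_nonneg.2 hP1),
      mul_pos hC1 hP]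
  · obtain ⟨f1, f2⟩ := (hc y h2).2 (by linarith)
    have e : (y - 1) ^ (α - 2) = (y - 1) ^ (α - 3) * (y - 1) := by
      rw [← Real.rpow_add_one hy1.ne']; congr 1; ring
    have hQ : 0 < (y - 1) ^ (α - 3) := Real.rpow_pos_of_pos hy1 _
    have e3 : y * |deriv (deriv φ) y| ≤ 2 * C₁ * (y - 1) ^ (α - 2) := by
      calc y * |deriv (deriv φ) y| ≤ (2 * (y - 1)) * (C₁ * (y - 1) ^ (α - 3)) :=
            mul_le_mul (by linarith) f2 (abs_nonneg _) (by linarith)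
        _ = _ := by rw [e]; ring
    have : 0 ≤ (lam * α + 2 * C₀ + 2 * (lam * α * (α - 1) + C₀)) * (y - 1) ^ (α - 2) := by
      positivity
    linarith

lemma aux_mixed_lt (β : ℝ) (φ : ℝ → ℝ)
    (hφ : ∀ y : ℝ, 1 < y → DifferentiableAt ℝ φ y ∧ DifferentiableAt ℝ (deriv φ) y)
    (s t : ℝ) (hs : 0 < s) (hst : s < t) :
    mixedPartialR β φ s t = s ^ (2 * β - 2) * auxG β φ (t / s) := by
  unfold mixedPartialR
  have h1 : (fun u : ℝ => deriv (fun v : ℝ => covR β φ u v) t) =ᶠ[nhds s]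
      fun u => u ^ (2 * β) * (deriv φ (t / u) * u⁻¹) := by
    filter_upwards [lt_mem_nhds hs, gt_mem_nhds hst] with u hu0 hut
    have h2 : (fun v : ℝ => covR β φ u v) =ᶠ[nhds t] fun v => u ^ (2 * β) * φ (v / u) := by
      filter_upwards [lt_mem_nhds hut] with v hv
      simp [covR, hu0.ne', (hu0.trans hv).ne', min_eq_left hv.le, max_eq_right hv.le]
    rw [h2.deriv_eq]
    have hy : 1 < t / u := (one_lt_div hu0).2 hut
    have h3 : HasDerivAt (fun v : ℝ => v / u) (u⁻¹) t := by
      simpa using (hasDerivAt_id t).div_const u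
    exact (((hφ _ hy).1.hasDerivAt.comp t h3).const_mul _).deriv
  rw [h1.deriv_eq]
  have hy : 1 < t / s := (one_lt_div hs).2 hst
  have h3 : HasDerivAt (fun u : ℝ => t / u) (t * (-(s ^ 2)⁻¹)) s := by
    simpa [div_eq_mul_inv] using (hasDerivAt_inv hs.ne').const_mul t
  have h4 := (Real.hasDerivAt_rpow_const (p := 2 * β) (Or.inl hs.ne')).mul
    (((hφ _ hy).2.hasDerivAt.comp s h3).mul (hasDerivAt_inv hs.ne'))
  refine h4.deriv.trans ?_
  have e1 : s ^ (2 * β - 1) = s ^ (2 * β - 2) * s := by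
    rw [← Real.rpow_add_one hs.ne']; congr 1; ring
  have e2 : s ^ (2 * β) = s ^ (2 * β - 2) * s * s := by
    rw [← Real.rpow_add_one hs.ne', ← Real.rpow_add_one hs.ne']; congr 1; ring
  simp only [Function.comp, Pi.mul_apply, auxG]
  rw [e1, e2]
  field_simp
  ring

lemma aux_mixed_gt (β : ℝ) (φ : ℝ → ℝ)
    (hφ : ∀ y : ℝ, 1 < y → DifferentiableAt ℝ φ y ∧ DifferentiableAt ℝ (deriv φ) y)
    (s t : ℝ) (ht : 0 < t) (hst : t < s) :
    mixedPartialR β φ s t = t ^ (2 * β - 2) * auxG β φ (s / t) := by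
  unfold mixedPartialR
  have e1 : t ^ (2 * β - 1) = t ^ (2 * β - 2) * t := by
    rw [← Real.rpow_add_one ht.ne']; congr 1; ring
  have e2 : t ^ (2 * β) = t ^ (2 * β - 2) * t * t := by
    rw [← Real.rpow_add_one ht.ne', ← Real.rpow_add_one ht.ne']; congr 1; ring
  have h1 : (fun u : ℝ => deriv (fun v : ℝ => covR β φ u v) t) =ᶠ[nhds s]
      fun u => t ^ (2 * β - 2) * t * (2 * β * φ (u / t) - u / t * deriv φ (u / t)) := by
    filter_upwards [lt_mem_nhds hst] with u hut
    have h2 : (fun v : ℝ => covR β φ u v) =ᶠ[nhds t] fun v => v ^ (2 * β) * φ (u / v) := by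
      filter_upwards [gt_mem_nhds hut, lt_mem_nhds ht] with v hv hv0
      simp [covR, hv0.ne', (hv0.trans hv).ne', min_eq_right hv.le, max_eq_left hv.le]
    rw [h2.deriv_eq]
    have hy : 1 < u / t := (one_lt_div ht).2 hut
    have h3 : HasDerivAt (fun v : ℝ => u / v) (u * (-(t ^ 2)⁻¹)) t := by
      simpa [div_eq_mul_inv] using (hasDerivAt_inv ht.ne').const_mul u
    have h4 := (Real.hasDerivAt_rpow_const (p := 2 * β) (Or.inl ht.ne')).mul
      ((hφ _ hy).1.hasDerivAt.comp t h3)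
    refine h4.deriv.trans ?_
    simp only [Function.comp]
    rw [e1, e2]
    field_simp
    ring
  rw [h1.deriv_eq]
  have hy : 1 < s / t := (one_lt_div ht).2 hst
  have h3 : HasDerivAt (fun v : ℝ => v / t) (t⁻¹) s := by
    simpa using (hasDerivAt_id s).div_const t
  have h4 := ((((hφ _ hy).1.hasDerivAt.comp s h3).const_mul (2 * β)).sub
    (h3.mul ((hφ _ hy).2.hasDerivAt.comp s h3))).const_mul (t ^ (2 * β - 2) * t)
  refine h4.deriv.trans ?_
  simp only [Function.comp, auxG]
  field_simp
  ring

lemma aux_mixed (β : ℝ) (φ : ℝ → ℝ)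
    (hφ : ∀ y : ℝ, 1 < y → DifferentiableAt ℝ φ y ∧ DifferentiableAt ℝ (deriv φ) y)
    (s t : ℝ) (hs : 0 < s) (ht : 0 < t) (hst : s ≠ t) :
    mixedPartialR β φ s t = (min s t) ^ (2 * β - 2) * auxG β φ (max s t / min s t) := by
  rcases lt_or_gt_of_ne hst with h | h
  · rw [min_eq_left h.le, max_eq_right h.le]; exact aux_mixed_lt β φ hφ s t hs h
  · rw [min_eq_right h.le, max_eq_left h.le]; exact aux_mixed_gt β φ hφ s t ht h

lemma aux_ptwise (β α C : ℝ) (G : ℝ → ℝ) (hα : α ≤ 2 * β)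
    (hG : ∀ y : ℝ, 1 < y → |G y| ≤ C * (y - 1) ^ (α - 2))
    (m M : ℝ) (hm : 0 < m) (hmM : m < M) :
    (m * M) ^ (α - 2 * β) * (m ^ (2 * β - 2) * G (M / m)) ^ 2
      ≤ C ^ 2 * (M - m) ^ (2 * α - 4) := by
  have hM : 0 < M := hm.trans hmM
  have hd : 0 < M - m := by linarith
  have hy : 1 < M / m := (one_lt_div hm).2 hmM
  have h1 := hG _ hy
  have e0 : M / m - 1 = (M - m) / m := by field_simp
  rw [e0] at h1
  have h2 : G (M / m) ^ 2 ≤ (C * ((M - m) / m) ^ (α - 2)) ^ 2 := by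
    rw [← sq_abs]; exact pow_le_pow_left₀ (abs_nonneg _) h1 2
  calc (m * M) ^ (α - 2 * β) * (m ^ (2 * β - 2) * G (M / m)) ^ 2
      ≤ (m * m) ^ (α - 2 * β) * (m ^ (2 * β - 2) * (C * ((M - m) / m) ^ (α - 2))) ^ 2 := by
        rw [mul_pow, mul_pow (m ^ (2 * β - 2))]
        refine mul_le_mul ?_ (mul_le_mul_of_nonneg_left h2 (by positivity)) (by positivity)
          (by positivity)
        exact Real.rpow_le_rpow_of_nonpos (by positivity)
          (mul_le_mul_of_nonneg_left hmM.le hm.le) (by linarith)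
    _ = C ^ 2 * (M - m) ^ (2 * α - 4) := by
        rw [Real.mul_rpow hm.le hm.le, Real.div_rpow hd.le hm.le]
        have a1 : (M - m) ^ (2 * α - 4) = (M - m) ^ (α - 2) * (M - m) ^ (α - 2) := by
          rw [← Real.rpow_add hd]; congr 1; ring
        have a2 : m ^ (α - 2 * β) * m ^ (2 * β - 2) = m ^ (α - 2) := by
          rw [← Real.rpow_add hm]; congr 1; ring
        have a3 : m ^ (α - 2) ≠ 0 := (Real.rpow_pos_of_pos hm _).ne'
        rw [a1]
        calc _ = C ^ 2 * ((M - m) ^ (α - 2) * (M - m) ^ (α - 2)) *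
              ((m ^ (α - 2 * β) * m ^ (2 * β - 2)) / m ^ (α - 2)) ^ 2 := by ring
          _ = _ := by rw [a2, div_self a3]; ring

lemma aux_diag : ∀ᵐ p : ℝ × ℝ, p.1 ≠ p.2 := by
  have hm : MeasurableSet {p : ℝ × ℝ | p.1 = p.2} := measurableSet_eq_fun measurable_fst measurable_snd
  have : (volume : Measure (ℝ × ℝ)) {p : ℝ × ℝ | p.1 = p.2} = 0 := by
    rw [Measure.volume_eq_prod, Measure.measure_prod_null hm]
    refine Eventually.of_forall fun a => ?_
    have : Prod.mk a ⁻¹' {p : ℝ × ℝ | p.1 = p.2} = {a} := by ext b; simp [eq_comm]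
    simp [this]
  rw [ae_iff]
  simpa using this

lemma aux_int (γ x : ℝ) (hγ : -1 < γ) (hx : 0 < x) :
    IntegrableOn (fun p : ℝ × ℝ => |p.1 - p.2| ^ γ) (Set.Ioo 0 x ×ˢ Set.Ioo 0 x) volume := by
  have h0 : IntegrableOn (fun u : ℝ => u ^ γ) (Set.Ioo 0 x) volume := by
    have := (intervalIntegral.intervalIntegrable_rpow' (a := 0) (b := x) hγ).1
    exact this.mono_set Set.Ioo_subset_Ioc_self
  have h1 : Integrable ((Set.Ioo 0 x).indicator (fun u : ℝ => u ^ γ)) volume :=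
    h0.integrable_indicator measurableSet_Ioo
  have h2 := h1.add h1.comp_neg
  have h3 : Integrable ((Set.Ioo 0 x).indicator (fun _ : ℝ => (1 : ℝ))) volume :=
    IntegrableOn.integrable_indicator (by simp) measurableSet_Ioo
  have h4 := Integrable.convolution_integrand (ContinuousLinearMap.mul ℝ ℝ) h3 h2
  rw [← Measure.volume_eq_prod] at h4
  have hdiag : ∀ᵐ p : ℝ × ℝ, p.1 ≠ p.2 := aux_diag
  refine (h4.integrableOn (s := Set.Ioo 0 x ×ˢ Set.Ioo 0 x)).congr ?_
  filter_upwards [ae_restrict_mem (measurableSet_Ioo.prod measurableSet_Ioo),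
    ae_restrict_of_ae hdiag] with p hp hne
  obtain ⟨⟨p1, p2⟩, ⟨p3, p4⟩⟩ := hp
  rcases lt_or_gt_of_ne hne with h | h
  · rw [abs_of_neg (by linarith)]
    have i1 : ¬ (p.2 < p.1) := by linarith
    have i2 : p.2 < x + p.1 := by linarith
    have i3 : p.2 - p.1 < x := by linarith
    simp [Set.indicator, p3, p4, h, i1, i2, i3]
  · rw [abs_of_pos (by linarith)]
    have i1 : ¬ (p.1 < p.2) := by linarith
    have i2 : p.1 < x + p.2 := by linarith
    have i3 : p.1 - p.2 < x := by linarith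
    simp [Set.indicator, p3, p4, h, i1, i2, i3]

/-- for `3/2 < α < 2` and every `x > 0`, the function
`(s,t) ↦ (st)^{α−2β} (∂_s∂_t R(s,t))²` is Lebesgue integrable on `(0,x)²`. -/
theorem mixedPartial_sq_integrable (β lam α ν : ℝ) (φ ψ : ℝ → ℝ)
    (hyp : SelfSimilarHyp β lam α ν φ ψ)
    (hα1 : 3 / 2 < α) (hα2 : α < 2) (x : ℝ) (hx : 0 < x) :
    MeasureTheory.IntegrableOn
      (fun p : ℝ × ℝ => (p.1 * p.2) ^ (α - 2 * β) * mixedPartialR β φ p.1 p.2 ^ 2)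
      (Set.Ioo 0 x ×ˢ Set.Ioo 0 x) MeasureTheory.volume := by
  obtain ⟨C, hC, hG⟩ := aux_bound β lam α ν φ ψ hyp hα1 hα2
  have hφ : ∀ y : ℝ, 1 < y → DifferentiableAt ℝ φ y ∧ DifferentiableAt ℝ (deriv φ) y :=
    fun y hy => ⟨(aux_diff β lam α ν φ ψ hyp y hy).1.differentiableAt,
      (aux_diff β lam α ν φ ψ hyp y hy).2.differentiableAt⟩
  have hα : α ≤ 2 * β := hyp.2.2.1.2
  have hGm : Measurable (auxG β φ) := by
    unfold auxG
    exact ((measurable_deriv φ).const_mul _).sub (measurable_id.mul (measurable_deriv _))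
  have hFm : Measurable (fun p : ℝ × ℝ => (p.1 * p.2) ^ (α - 2 * β) *
      ((min p.1 p.2) ^ (2 * β - 2) * auxG β φ (max p.1 p.2 / min p.1 p.2)) ^ 2) := by
    have hmin : Measurable (fun p : ℝ × ℝ => min p.1 p.2) := measurable_fst.min measurable_snd
    have hmax : Measurable (fun p : ℝ × ℝ => max p.1 p.2) := measurable_fst.max measurable_snd
    exact ((measurable_fst.mul measurable_snd).pow_const _).mul
      (((hmin.pow_const _).mul (hGm.comp (hmax.div hmin))).pow_const _)
  have hi : IntegrableOn (fun p : ℝ × ℝ => C ^ 2 * |p.1 - p.2| ^ (2 * α - 4))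
      (Set.Ioo 0 x ×ˢ Set.Ioo 0 x) volume :=
    Integrable.const_mul (aux_int (2 * α - 4) x (by linarith) hx) _
  have hmain : IntegrableOn (fun p : ℝ × ℝ => (p.1 * p.2) ^ (α - 2 * β) *
      ((min p.1 p.2) ^ (2 * β - 2) * auxG β φ (max p.1 p.2 / min p.1 p.2)) ^ 2)
      (Set.Ioo 0 x ×ˢ Set.Ioo 0 x) volume := by
    refine Integrable.mono' hi hFm.aestronglyMeasurable ?_
    filter_upwards [ae_restrict_mem (measurableSet_Ioo.prod measurableSet_Ioo),
      ae_restrict_of_ae aux_diag] with p hp hne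
    obtain ⟨⟨p1, p2⟩, ⟨p3, p4⟩⟩ := hp
    rw [Real.norm_of_nonneg (by positivity)]
    rcases lt_or_gt_of_ne hne with h | h
    · rw [min_eq_left h.le, max_eq_right h.le, abs_sub_comm, abs_of_pos (sub_pos.2 h)]
      exact aux_ptwise β α C _ hα hG _ _ p1 h
    · rw [min_eq_right h.le, max_eq_left h.le, abs_of_pos (sub_pos.2 h), mul_comm p.1 p.2]
      exact aux_ptwise β α C _ hα hG _ _ p3 h
  refine Integrable.congr hmain ?_
  filter_upwards [ae_restrict_mem (measurableSet_Ioo.prod measurableSet_Ioo),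
    ae_restrict_of_ae aux_diag] with p hp hne
  obtain ⟨⟨p1, p2⟩, ⟨p3, p4⟩⟩ := hp
  rw [aux_mixed β φ hφ p.1 p.2 p1 p3 hne]
end
end

section
/- Let 3/2 < α < 2 and 0 < a < b. Then there exists a constant C > 0 (depending only on α, a, b) such that for every integer d ≥ 1 and all reals y, x with a ≤ y ≤ x ≤ b, setting N = ⌊dx⌋ − ⌊dy⌋, one has d^{2−2α} Σ_{m=1}^{N} (N − m) m^{2(α−2)} ≤ C (x − y). -/
theorem aux_sum_rpow (p : ℝ) (hp0 : 0 < p) (hp1 : p ≤ 1) (N : ℕ) :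
    ∑ m ∈ Finset.Icc 1 N, (m : ℝ) ^ (p - 1) ≤ (N : ℝ) ^ p / p := by
  induction N with
  | zero => simp [Real.zero_rpow hp0.ne']
  | succ n ih =>
    rw [Finset.sum_Icc_succ_top (by omega)]
    have hM : (0 : ℝ) < ((n + 1 : ℕ) : ℝ) := by positivity
    have hMn : ((n + 1 : ℕ) : ℝ) = n + 1 := by push_cast; ring
    set M : ℝ := ((n + 1 : ℕ) : ℝ) with hMdef
    have hM1 : 1 ≤ M := by
      have : (0 : ℝ) ≤ n := Nat.cast_nonneg n
      linarith
    have hinv : 1 / M ≤ 1 := by rw [div_le_one hM]; exact hM1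
    have hB := rpow_one_add_le_one_add_mul_self (s := -(1 / M)) (by linarith) hp0.le hp1
    have hn : (n : ℝ) = M * (1 + -(1 / M)) := by
      field_simp; linarith
    have h1 : (n : ℝ) ^ p ≤ M ^ p - p * M ^ (p - 1) := by
      rw [hn, Real.mul_rpow hM.le (by linarith), Real.rpow_sub_one hM.ne']
      calc M ^ p * (1 + -(1 / M)) ^ p ≤ M ^ p * (1 + p * -(1 / M)) :=
            mul_le_mul_of_nonneg_left hB (by positivity)
        _ = _ := by ring
    have h2 : (n : ℝ) ^ p / p ≤ M ^ p / p - M ^ (p - 1) := by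
      rw [div_le_iff₀ hp0, sub_mul, div_mul_cancel₀ _ hp0.ne']
      linarith
    linarith

/-- for `3/2 < α < 2` and `0 < a < b` there is `C > 0` such that
for every integer `d ≥ 1` and reals `a ≤ y ≤ x ≤ b`, with `N = ⌊dx⌋ − ⌊dy⌋`,
`d^{2−2α} Σ_{m=1}^{N} (N − m) m^{2(α−2)} ≤ C (x − y)`. -/
theorem sum_increment_bound_noncentral (α a b : ℝ) (hα1 : 3 / 2 < α) (hα2 : α < 2)
    (ha : 0 < a) (hab : a < b) :
    ∃ C : ℝ, 0 < C ∧ ∀ d : ℕ, 1 ≤ d → ∀ x y : ℝ, a ≤ y → y ≤ x → x ≤ b →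
      (d : ℝ) ^ (2 - 2 * α) *
          ∑ m ∈ Finset.Icc 1 (⌊(d : ℝ) * x⌋₊ - ⌊(d : ℝ) * y⌋₊),
            (((⌊(d : ℝ) * x⌋₊ - ⌊(d : ℝ) * y⌋₊ : ℕ) : ℝ) - (m : ℝ)) *
              (m : ℝ) ^ (2 * (α - 2))
        ≤ C * (x - y) := by
  have hL : 0 < b - a := by linarith
  have hp : 0 < 2 * α - 3 := by linarith
  refine ⟨(2 * (b - a)) ^ (2 * α - 3) / (2 * α - 3), by positivity, ?_⟩
  intro d hd x y hay hyx hxb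
  have hd0 : (0 : ℝ) < d := by exact_mod_cast hd
  have hle : ⌊(d : ℝ) * y⌋₊ ≤ ⌊(d : ℝ) * x⌋₊ :=
    Nat.floor_le_floor (mul_le_mul_of_nonneg_left hyx hd0.le)
  have hN1 : ((⌊(d : ℝ) * x⌋₊ - ⌊(d : ℝ) * y⌋₊ : ℕ) : ℝ) - 1 ≤ d * (x - y) := by
    rw [Nat.cast_sub hle]
    have h1 := Nat.floor_le (a := (d : ℝ) * x) (by apply mul_nonneg hd0.le; linarith)
    have h2 := Nat.lt_floor_add_one ((d : ℝ) * y)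
    linarith
  generalize ⌊(d : ℝ) * x⌋₊ - ⌊(d : ℝ) * y⌋₊ = N at hN1 ⊢
  have hxy : 0 ≤ x - y := by linarith
  rcases Nat.lt_or_ge N 2 with h | h
  · have : 0 ≤ (2 * (b - a)) ^ (2 * α - 3) / (2 * α - 3) * (x - y) := by positivity
    interval_cases N
    · simpa using this
    · simpa using this
  · have hN2 : (2 : ℝ) ≤ N := by exact_mod_cast h
    have hs := aux_sum_rpow (2 * α - 3) hp (by linarith) N
    have hNb : (N : ℝ) ≤ d * (2 * (b - a)) := by
      have : (d : ℝ) * (x - y) ≤ d * (b - a) := mul_le_mul_of_nonneg_left (by linarith) hd0.le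
      linarith
    have hpow : (N : ℝ) ^ (2 * α - 3) ≤ (d : ℝ) ^ (2 * α - 3) * (2 * (b - a)) ^ (2 * α - 3) := by
      rw [← Real.mul_rpow hd0.le (by linarith)]
      exact Real.rpow_le_rpow (by linarith) hNb hp.le
    have hsum : ∑ m ∈ Finset.Icc 1 N, ((N : ℝ) - (m : ℝ)) * (m : ℝ) ^ (2 * (α - 2)) ≤
        ((N : ℝ) - 1) * ∑ m ∈ Finset.Icc 1 N, (m : ℝ) ^ (2 * α - 3 - 1) := by
      rw [Finset.mul_sum]
      apply Finset.sum_le_sum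
      intro m hm
      have hm1 : (1 : ℝ) ≤ m := by exact_mod_cast (Finset.mem_Icc.mp hm).1
      rw [show 2 * (α - 2) = 2 * α - 3 - 1 by ring]
      apply mul_le_mul_of_nonneg_right (by linarith) (by positivity)
    have hdd : (d : ℝ) ^ (2 - 2 * α) * (d * (d : ℝ) ^ (2 * α - 3)) = 1 := by
      nth_rewrite 2 [← Real.rpow_one (d : ℝ)]
      rw [← Real.rpow_add hd0, ← Real.rpow_add hd0]
      ring_nf
      simp
    calc _ ≤ (d : ℝ) ^ (2 - 2 * α) * ((d * (x - y)) *
          ((d : ℝ) ^ (2 * α - 3) * (2 * (b - a)) ^ (2 * α - 3) / (2 * α - 3))) := by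
          apply mul_le_mul_of_nonneg_left _ (by positivity)
          refine hsum.trans (mul_le_mul hN1 (hs.trans ?_) ?_ (by positivity))
          · exact div_le_div_of_nonneg_right hpow hp.le
          · exact Finset.sum_nonneg fun m _ => by positivity
      _ = ((d : ℝ) ^ (2 - 2 * α) * (d * (d : ℝ) ^ (2 * α - 3))) *
          ((2 * (b - a)) ^ (2 * α - 3) / (2 * α - 3) * (x - y)) := by ring
      _ = _ := by rw [hdd, one_mul]
end

section
/- Fix x > 0. Then there exists a constant C > 0 (depending only on x) such that for all integers d ≥ 3: |x − (1/(d ln d)) Σ_{m=1}^{⌊dx⌋−1} (⌊dx⌋ − m − 1)/m| ≤ C / ln d. -/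
/-- for fixed `x > 0` there is `C > 0` (depending only on `x`)
such that for all integers `d ≥ 3`,
`|x − (1/(d ln d)) Σ_{m=1}^{⌊dx⌋−1} (⌊dx⌋ − m − 1)/m| ≤ C / ln d`. -/
theorem log_sum_estimate (x : ℝ) (hx : 0 < x) :
    ∃ C : ℝ, 0 < C ∧ ∀ d : ℕ, 3 ≤ d →
      |x - (1 / ((d : ℝ) * Real.log d)) *
          ∑ m ∈ Finset.Icc 1 (⌊(d : ℝ) * x⌋₊ - 1),
            (((⌊(d : ℝ) * x⌋₊ : ℕ) : ℝ) - (m : ℝ) - 1) / (m : ℝ)|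
        ≤ C / Real.log d := by
  have hK : 0 ≤ 2 + |Real.log x| := by positivity
  refine ⟨2 + x * (2 + |Real.log x|), by positivity, ?_⟩
  intro d hd
  have hd3 : (3 : ℝ) ≤ d := by exact_mod_cast hd
  have hd0 : (0 : ℝ) < d := by linarith
  have hL : 0 < Real.log d := Real.log_pos (by linarith)
  have hLd : Real.log d ≤ d := by
    have := Real.log_le_sub_one_of_pos hd0
    linarith
  have hdx : 0 < (d : ℝ) * x := by positivity
  have hfl : ((⌊(d : ℝ) * x⌋₊ : ℕ) : ℝ) ≤ d * x := Nat.floor_le hdx.le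
  have hfu : (d : ℝ) * x < (⌊(d : ℝ) * x⌋₊ : ℕ) + 1 := Nat.lt_floor_add_one _
  generalize ⌊(d : ℝ) * x⌋₊ = n at hfl hfu ⊢
  have hxK : 0 ≤ x * (2 + |Real.log x|) := by positivity
  rcases n with _ | k
  · simp only [Nat.cast_zero, zero_add] at hfu
    simp only [zero_tsub, Finset.Icc_eq_empty_of_lt one_pos, Finset.sum_empty, mul_zero, sub_zero]
    rw [abs_of_pos hx, le_div_iff₀ hL]
    nlinarith
  · have hS : ∑ m ∈ Finset.Icc 1 (k + 1 - 1), (((k + 1 : ℕ) : ℝ) - (m : ℝ) - 1) / (m : ℝ)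
        = k * ((harmonic k : ℝ) - 1) := by
      have h1 : ∀ m ∈ Finset.Icc 1 k, (((k + 1 : ℕ) : ℝ) - (m : ℝ) - 1) / (m : ℝ)
          = k * (m : ℝ)⁻¹ - 1 := by
        intro m hm
        have : (m : ℝ) ≠ 0 := by
          have := (Finset.mem_Icc.mp hm).1
          positivity
        push_cast
        field_simp
        ring
      rw [Nat.add_sub_cancel, Finset.sum_congr rfl h1, Finset.sum_sub_distrib, ← Finset.mul_sum,
        harmonic_eq_sum_Icc]
      push_cast
      simp
      ring
    rw [hS]
    have hl := log_add_one_le_harmonic k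
    have hu : (harmonic k : ℝ) ≤ 1 + Real.log ((k + 1 : ℕ) : ℝ) := by
      refine (harmonic_le_one_add_log k).trans ?_
      rcases Nat.eq_zero_or_pos k with rfl | hk
      · simp
      · have : (0 : ℝ) < k := by exact_mod_cast hk
        gcongr
        simp
    generalize (harmonic k : ℝ) = H at hl hu ⊢
    have hk0 : (0 : ℝ) ≤ k := k.cast_nonneg
    have hlog : Real.log ((d : ℝ) * x) = Real.log d + Real.log x :=
      Real.log_mul hd0.ne' hx.ne'
    have hn0 : (0 : ℝ) < ((k + 1 : ℕ) : ℝ) := by positivity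
    have ha : Real.log ((k + 1 : ℕ) : ℝ) ≤ Real.log (d * x) := Real.log_le_log hn0 hfl
    have hb : Real.log (d * x) ≤ Real.log ((k + 1 : ℕ) : ℝ) + 1 := by
      have h2 : Real.log (d * x) ≤ Real.log (2 * ((k + 1 : ℕ) : ℝ)) := by
        apply Real.log_le_log hdx
        push_cast at hfu ⊢
        linarith
      rw [Real.log_mul two_ne_zero hn0.ne'] at h2
      have := Real.log_le_sub_one_of_pos (zero_lt_two (α := ℝ))
      linarith
    have hh : |H - 1 - Real.log d| ≤ 2 + |Real.log x| := by
      have h3 := le_abs_self (Real.log x)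
      have h4 := neg_abs_le (Real.log x)
      rw [abs_le]
      constructor <;> linarith
    push_cast at hfl hfu
    have e : x - 1 / ((d : ℝ) * Real.log d) * (k * (H - 1))
        = ((d * x - k) * Real.log d - k * (H - 1 - Real.log d)) / (d * Real.log d) := by
      field_simp
      ring
    rw [e, abs_div, abs_of_pos (mul_pos hd0 hL), div_le_div_iff₀ (mul_pos hd0 hL) hL]
    have key : |(d * x - k) * Real.log d - k * (H - 1 - Real.log d)|
        ≤ (2 + x * (2 + |Real.log x|)) * d := by
      refine (abs_sub _ _).trans ?_
      rw [abs_mul, abs_mul, abs_of_pos hL, abs_of_nonneg hk0,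
        abs_of_nonneg (by linarith : 0 ≤ (d : ℝ) * x - k)]
      have h5 : (d * x - k) * Real.log d ≤ 2 * d :=
        mul_le_mul (by linarith) hLd hL.le (by norm_num)
      have h6 : k * |H - 1 - Real.log d| ≤ (d * x) * (2 + |Real.log x|) :=
        mul_le_mul (by linarith) hh (abs_nonneg _) hdx.le
      linarith
    calc _ ≤ (2 + x * (2 + |Real.log x|)) * d * Real.log d := by gcongr
      _ = _ := by ring
end
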